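/- arXiv:1007.0511 — 3 statements merged into one kernel-verified Lean document; each statement's English description precedes it below -/
import Mathlib

section
/- Let P be a d-dimensional polytope, S a polyhedral decomposition of P, and σ a proper (possibly empty) face of P that is a face of S. Then for any (possibly empty) face σ' of σ, the sum of (−1)^{dim τ} over all faces τ of S whose relative interior lies in the relative interior of P and which satisfy τ ∩ σ = σ', equals (−1)^d if σ' = σ, and 0 otherwise. -/
open scoped Classical

/-- A polytope in Euclidean space: the convex hull of a finite set. -/
def IsPolytope {n : ℕ} (P : Set (EuclideanSpace ℝ (Fin n))) : Prop :=
  ∃ V : Finset (EuclideanSpace ℝ (Fin n)), P = convexHull ℝ (V : Set (EuclideanSpace ℝ (Fin n)))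

/-- The dimension of a nonempty subset of Euclidean space: the dimension of its affine hull. -/
noncomputable def pdim {n : ℕ} (s : Set (EuclideanSpace ℝ (Fin n))) : ℕ :=
  Module.finrank ℝ (vectorSpan ℝ s)

/-- A (finite) polyhedral decomposition of a set `P`: a finite complex of nonempty polytopes,
closed under taking nonempty faces, in which any two cells intersect in a (possibly empty) face
of each, and whose union is `P`. -/
structure PolyDecomp (n : ℕ) (P : Set (EuclideanSpace ℝ (Fin n))) where
  cells : Finset (Set (EuclideanSpace ℝ (Fin n)))
  nonempty : ∀ C ∈ cells, C.Nonempty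
  polytope : ∀ C ∈ cells, IsPolytope C
  face_mem : ∀ C ∈ cells, ∀ F : Set (EuclideanSpace ℝ (Fin n)),
    IsExposed ℝ C F → F.Nonempty → F ∈ cells
  inter_face : ∀ C ∈ cells, ∀ D ∈ cells, IsExposed ℝ C (C ∩ D)
  cover : ⋃₀ (cells : Set (Set (EuclideanSpace ℝ (Fin n)))) = P

open Set Filter Topology

section IntrinsicInterior

variable {E : Type*} [NormedAddCommGroup E] [NormedSpace ℝ E]

/-- The translate of `C` by `-x`, as a subset of the direction of the affine span of `C`. -/
def translateInSpan (C : Set E) (x : E) : Set (vectorSpan ℝ C) :=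
  {w | x + (w : E) ∈ C}

theorem add_mem_intrinsicInterior_iff {C : Set E} {x : E} (hx : x ∈ C) (w : vectorSpan ℝ C) :
    x + (w : E) ∈ intrinsicInterior ℝ C ↔ w ∈ interior (translateInSpan C x) := by
  have hxs : x ∈ affineSpan ℝ C := subset_affineSpan ℝ C hx
  have hadd : ∀ w : vectorSpan ℝ C, x + (w : E) ∈ affineSpan ℝ C := fun w => by
    have := AffineSubspace.vadd_mem_of_mem_direction
      (show (w : E) ∈ (affineSpan ℝ C).direction by rw [direction_affineSpan]; exact w.2) hxs
    rwa [vadd_eq_add, add_comm] at this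
  have hsub : ∀ y : affineSpan ℝ C, (y : E) - x ∈ vectorSpan ℝ C := fun y => by
    rw [← direction_affineSpan, ← vsub_eq_sub]
    exact AffineSubspace.vsub_mem_direction y.2 hxs
  let e : vectorSpan ℝ C ≃ₜ affineSpan ℝ C :=
    { toFun := fun w => ⟨x + w, hadd w⟩
      invFun := fun y => ⟨y - x, hsub y⟩
      left_inv := fun w => by ext; simp
      right_inv := fun y => by ext; simp
      continuous_toFun := by fun_prop
      continuous_invFun := by fun_prop }
  have hpre : translateInSpan C x = e ⁻¹' ((↑) ⁻¹' C : Set (affineSpan ℝ C)) := rfl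
  rw [hpre, ← e.preimage_interior, mem_intrinsicInterior]
  constructor
  · rintro ⟨y, hy, hyx⟩
    have : e w = y := Subtype.ext hyx.symm
    rwa [mem_preimage, this]
  · intro h
    exact ⟨e w, h, rfl⟩

theorem sub_mem_vectorSpan {C : Set E} {x y : E} (hx : x ∈ C) (hy : y ∈ C) :
    y - x ∈ vectorSpan ℝ C := vsub_mem_vectorSpan ℝ hy hx

theorem mem_intrinsicInterior_iff_sub {C : Set E} {x y : E} (hx : x ∈ C) (hy : y ∈ C) :
    y ∈ intrinsicInterior ℝ C ↔
      (⟨y - x, sub_mem_vectorSpan hx hy⟩ : vectorSpan ℝ C) ∈ interior (translateInSpan C x) := by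
  rw [← add_mem_intrinsicInterior_iff hx]
  simp

theorem convex_translateInSpan {C : Set E} (hC : Convex ℝ C) (x : E) :
    Convex ℝ (translateInSpan C x) := by
  intro v hv w hw a b ha hb hab
  have := hC hv hw ha hb hab
  have hx : x = a • x + b • x := by rw [← add_smul, hab, one_smul]
  change x + ((a • v + b • w : vectorSpan ℝ C) : E) ∈ C
  convert this using 1
  push_cast
  nth_rewrite 1 [hx]
  module

theorem convex_intrinsicInterior {C : Set E} (hC : Convex ℝ C) :
    Convex ℝ (intrinsicInterior ℝ C) := by
  intro y hy z hz a b ha hb hab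
  have hyC := intrinsicInterior_subset hy
  have hzC := intrinsicInterior_subset hz
  have h := (convex_translateInSpan hC y).interior ((mem_intrinsicInterior_iff_sub hyC hyC).1 hy)
    ((mem_intrinsicInterior_iff_sub hyC hzC).1 hz) ha hb hab
  rw [mem_intrinsicInterior_iff_sub hyC (hC hyC hzC ha hb hab)]
  convert h using 1
  ext
  have hy' : y = a • y + b • y := by rw [← add_smul, hab, one_smul]
  push_cast
  nth_rewrite 2 [hy']
  module

theorem eventually_add_smul_mem_intrinsicInterior {C : Set E} {x v : E}
    (hx : x ∈ intrinsicInterior ℝ C) (hv : v ∈ vectorSpan ℝ C) :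
    ∀ᶠ ε : ℝ in 𝓝 0, x + ε • v ∈ intrinsicInterior ℝ C := by
  have hxC := intrinsicInterior_subset hx
  have h0 : (0 : vectorSpan ℝ C) ∈ interior (translateInSpan C x) := by
    rw [← add_mem_intrinsicInterior_iff hxC]; simpa using hx
  have hcont : Continuous fun ε : ℝ => ε • (⟨v, hv⟩ : vectorSpan ℝ C) := by fun_prop
  have := hcont.continuousAt.preimage_mem_nhds (x := 0)
    (isOpen_interior.mem_nhds (by simpa using h0))
  filter_upwards [this] with ε hε
  exact (add_mem_intrinsicInterior_iff hxC (ε • ⟨v, hv⟩)).2 hε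

theorem IsExposed.eq_of_mem_intrinsicInterior {C F : Set E} (hF : IsExposed ℝ C F) {x : E}
    (hxF : x ∈ F) (hx : x ∈ intrinsicInterior ℝ C) : F = C := by
  obtain ⟨l, rfl⟩ := hF ⟨x, hxF⟩
  refine Subset.antisymm (fun y hy => hy.1) fun y hy => ⟨hy, fun z hz => ?_⟩
  refine (hxF.2 z hz).trans ?_
  have hev := eventually_add_smul_mem_intrinsicInterior hx (sub_mem_vectorSpan hy hxF.1)
  obtain ⟨ε, hε, hε0⟩ := ((hev.filter_mono nhdsWithin_le_nhds).and
    (self_mem_nhdsWithin (a := (0 : ℝ)) (s := Ioi 0))).exists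
  have := hxF.2 _ (intrinsicInterior_subset hε)
  simp only [map_add, map_smul, map_sub, smul_eq_mul] at this
  have h2 : ε * (l x - l y) ≤ 0 := by linarith
  have := nonpos_of_mul_nonpos_right h2 hε0
  linarith

variable [FiniteDimensional ℝ E]

theorem interior_translateInSpan_nonempty {C : Set E} (hC : Convex ℝ C) {x : E}
    (hx : x ∈ C) : (interior (translateInSpan C x)).Nonempty := by
  obtain ⟨y, hy⟩ := Set.Nonempty.intrinsicInterior hC ⟨x, hx⟩
  exact ⟨_, (mem_intrinsicInterior_iff_sub hx (intrinsicInterior_subset hy)).1 hy⟩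

theorem subset_closure_interior_translateInSpan {C : Set E} (hC : Convex ℝ C) {x : E}
    (hx : x ∈ C) :
    translateInSpan C x ⊆ closure (interior (translateInSpan C x)) := by
  rw [(convex_translateInSpan hC x).closure_interior_eq_closure_of_nonempty_interior
    (interior_translateInSpan_nonempty hC hx)]
  exact subset_closure

theorem subset_closure_intrinsicInterior {C : Set E} (hC : Convex ℝ C) :
    C ⊆ closure (intrinsicInterior ℝ C) := by
  intro x hx
  have h0 : (0 : vectorSpan ℝ C) ∈ closure (interior (translateInSpan C x)) :=
    subset_closure_interior_translateInSpan hC hx (by simpa [translateInSpan] using hx)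
  have hcont : Continuous fun w : vectorSpan ℝ C => x + (w : E) := by fun_prop
  have := map_mem_closure hcont h0 (t := intrinsicInterior ℝ C)
    fun w hw => (add_mem_intrinsicInterior_iff hx w).2 hw
  simpa using this

/-- A point of a convex set outside the intrinsic interior has a nontrivial supporting
hyperplane. -/
theorem exists_supporting_of_notMem_intrinsicInterior {C : Set E} (hC : Convex ℝ C) {x : E}
    (hx : x ∈ C) (hxi : x ∉ intrinsicInterior ℝ C) :
    ∃ l : StrongDual ℝ E, (∀ y ∈ C, l y ≤ l x) ∧ ∃ y ∈ C, l y < l x := by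
  have h0 : (0 : vectorSpan ℝ C) ∉ interior (translateInSpan C x) := by
    rw [← add_mem_intrinsicInterior_iff hx]; simpa using hxi
  obtain ⟨f, hf⟩ := geometric_hahn_banach_open_point (convex_translateInSpan hC x).interior
    isOpen_interior h0
  obtain ⟨g, hg⟩ := LinearMap.exists_extend f.toLinearMap
  have hgf : ∀ w : vectorSpan ℝ C, g w = f w := fun w => LinearMap.congr_fun hg w
  have hle : ∀ w ∈ closure (interior (translateInSpan C x)), f w ≤ 0 := by
    apply closure_minimal _ (isClosed_le f.continuous continuous_const)
    intro w hw
    simpa using (hf w hw).le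
  refine ⟨g.toContinuousLinearMap, fun y hy => ?_, ?_⟩
  · have hmem : (⟨y - x, sub_mem_vectorSpan hx hy⟩ : vectorSpan ℝ C) ∈
        translateInSpan C x := by simpa [translateInSpan] using hy
    have := hle _ (subset_closure_interior_translateInSpan hC hx hmem)
    rw [← hgf] at this
    simpa using this
  · obtain ⟨w, hw⟩ := interior_translateInSpan_nonempty hC hx
    have hwC : w ∈ translateInSpan C x := interior_subset hw
    refine ⟨x + w, hwC, ?_⟩
    have := hf w hw
    rw [← hgf] at this
    simpa using this

end IntrinsicInterior

section EulerCharacteristic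

variable {n : ℕ}

/-- A convex set that is open in its affine span, expressed algebraically. -/
structure IsRelOpenConvex (U : Set (EuclideanSpace ℝ (Fin n))) : Prop where
  convex : Convex ℝ U
  exists_add_smul_mem : ∀ x ∈ U, ∀ v ∈ vectorSpan ℝ U, ∃ ε : ℝ, 0 < ε ∧ x + ε • v ∈ U

/-- The Euler characteristic with compact support of a relatively open convex set. -/
noncomputable def openEuler (U : Set (EuclideanSpace ℝ (Fin n))) : ℤ :=
  if U.Nonempty then (-1) ^ pdim U else 0

theorem openEuler_of_nonempty {U : Set (EuclideanSpace ℝ (Fin n))} (hU : U.Nonempty) :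
    openEuler U = (-1) ^ pdim U := if_pos hU

theorem openEuler_empty : openEuler (∅ : Set (EuclideanSpace ℝ (Fin n))) = 0 :=
  if_neg Set.not_nonempty_empty

variable {U : Set (EuclideanSpace ℝ (Fin n))} (l : StrongDual ℝ (EuclideanSpace ℝ (Fin n)))

/-- The part of `U` on which `l` takes the value `t`. -/
def levelSlice (U : Set (EuclideanSpace ℝ (Fin n))) (t : ℝ) : Set (EuclideanSpace ℝ (Fin n)) :=
  {x ∈ U | l x = t}

theorem vectorSpan_slice_le (t : ℝ) :
    vectorSpan ℝ (levelSlice l U t) ≤ vectorSpan ℝ U ⊓ l.toLinearMap.ker := by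
  refine le_inf (vectorSpan_mono ℝ fun x hx => hx.1) ?_
  rw [vectorSpan, Submodule.span_le]
  rintro _ ⟨x, hx, y, hy, rfl⟩
  have h1 : l x = t := hx.2
  have h2 : l y = t := hy.2
  simp [h1, h2]

theorem IsRelOpenConvex.slice (hU : IsRelOpenConvex U) (t : ℝ) :
    IsRelOpenConvex (levelSlice l U t) where
  convex := by
    rintro x ⟨hx, hxt⟩ y ⟨hy, hyt⟩ a b ha hb hab
    refine ⟨hU.convex hx hy ha hb hab, ?_⟩
    simp only [map_add, map_smul, smul_eq_mul, hxt, hyt]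
    rw [← add_mul, hab, one_mul]
  exists_add_smul_mem := by
    rintro x ⟨hx, hxt⟩ v hv
    obtain ⟨hvU, hvl⟩ := vectorSpan_slice_le l t hv
    obtain ⟨ε, hε, h⟩ := hU.exists_add_smul_mem x hx v hvU
    have hvl' : l v = 0 := hvl
    exact ⟨ε, hε, h, by simp [hvl', hxt]⟩

theorem IsRelOpenConvex.vectorSpan_slice (hU : IsRelOpenConvex U) {t : ℝ}
    (ht : (levelSlice l U t).Nonempty) :
    vectorSpan ℝ (levelSlice l U t) = vectorSpan ℝ U ⊓ l.toLinearMap.ker := by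
  refine le_antisymm (vectorSpan_slice_le l t) ?_
  rintro v ⟨hvU, hvl⟩
  obtain ⟨x, hx, hxt⟩ := ht
  have hvl' : l v = 0 := hvl
  obtain ⟨ε, hε, h⟩ := hU.exists_add_smul_mem x hx v hvU
  have hmem : x + ε • v ∈ levelSlice l U t := ⟨h, by simp [hvl', hxt]⟩
  have := sub_mem_vectorSpan (C := levelSlice l U t) ⟨hx, hxt⟩ hmem
  rw [add_sub_cancel_left] at this
  exact (Submodule.smul_mem_iff _ hε.ne').1 this

theorem finrank_inf_ker_add_one {V : Type*} [AddCommGroup V] [Module ℝ V] [FiniteDimensional ℝ V]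
    (W : Submodule ℝ V) (f : V →ₗ[ℝ] ℝ) {v : V} (hv : v ∈ W) (hfv : f v ≠ 0) :
    Module.finrank ℝ (W ⊓ f.ker : Submodule ℝ V) + 1 = Module.finrank ℝ W := by
  have hne : f.domRestrict W ≠ 0 := fun h => hfv (LinearMap.congr_fun h ⟨v, hv⟩)
  have h := Module.Dual.finrank_ker_add_one_of_ne_zero hne
  rw [LinearMap.ker_domRestrict, ← Submodule.finrank_map_subtype_eq,
    Submodule.map_comap_subtype] at h
  exact h

theorem IsRelOpenConvex.pdim_slice (hU : IsRelOpenConvex U) {t : ℝ}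
    (ht : (levelSlice l U t).Nonempty) {y z : EuclideanSpace ℝ (Fin n)} (hy : y ∈ U) (hz : z ∈ U)
    (hyz : l y ≠ l z) : pdim (levelSlice l U t) + 1 = pdim U := by
  unfold pdim
  rw [hU.vectorSpan_slice l ht]
  refine finrank_inf_ker_add_one _ _ (sub_mem_vectorSpan hz hy) ?_
  simpa [sub_eq_zero] using hyz

theorem slice_nonempty_iff {t : ℝ} : (levelSlice l U t).Nonempty ↔ t ∈ l '' U := Iff.rfl

theorem IsRelOpenConvex.openEuler_slice (hU : IsRelOpenConvex U)
    {y z : EuclideanSpace ℝ (Fin n)} (hy : y ∈ U) (hz : z ∈ U) (hyz : l y ≠ l z) (t : ℝ) :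
    openEuler (levelSlice l U t) = if t ∈ l '' U then -openEuler U else 0 := by
  split_ifs with ht
  · rw [openEuler_of_nonempty ((slice_nonempty_iff l).2 ht), openEuler_of_nonempty ⟨y, hy⟩,
      ← hU.pdim_slice l ((slice_nonempty_iff l).2 ht) hy hz hyz, pow_succ]
    ring
  · exact if_neg fun h => ht ((slice_nonempty_iff l).1 h)

theorem IsRelOpenConvex.image_eq_Ioo (hU : IsRelOpenConvex U) (hb : Bornology.IsBounded U)
    {y z : EuclideanSpace ℝ (Fin n)} (hy : y ∈ U) (hz : z ∈ U) (hyz : l y < l z) :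
    l '' U = Ioo (sInf (l '' U)) (sSup (l '' U)) := by
  have hbd : Bornology.IsBounded (l '' U) := l.lipschitz.isBounded_image hb
  have hne : (l '' U).Nonempty := ⟨_, mem_image_of_mem l hy⟩
  have hoc : (l '' U).OrdConnected :=
    (hU.convex.linear_image l.toLinearMap).ordConnected
  ext t
  constructor
  · rintro ⟨x, hx, rfl⟩
    have key : ∀ v ∈ vectorSpan ℝ U, ∃ ε : ℝ, 0 < ε ∧ l x + ε * l v ∈ l '' U := fun v hv => by
      obtain ⟨ε, hε, h⟩ := hU.exists_add_smul_mem x hx v hv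
      exact ⟨ε, hε, _, h, by simp⟩
    constructor
    · obtain ⟨ε, hε, h⟩ := key _ (sub_mem_vectorSpan hz hy)
      rw [map_sub] at h
      refine (csInf_le hbd.bddBelow h).trans_lt ?_
      nlinarith
    · obtain ⟨ε, hε, h⟩ := key _ (sub_mem_vectorSpan hy hz)
      rw [map_sub] at h
      refine lt_of_lt_of_le ?_ (le_csSup hbd.bddAbove h)
      nlinarith
  · rintro ⟨h1, h2⟩
    obtain ⟨p, hp, hpt⟩ := exists_lt_of_csInf_lt hne h1
    obtain ⟨q, hq, hqt⟩ := exists_lt_of_lt_csSup hne h2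
    exact hoc.out hp hq ⟨hpt.le, hqt.le⟩

theorem openEuler_slice_of_const {c : ℝ} (hc : ∀ x ∈ U, l x = c) (t : ℝ) :
    openEuler (levelSlice l U t) = if t = c then openEuler U else 0 := by
  split_ifs with h
  · congr 1
    ext x
    exact ⟨fun hx => hx.1, fun hx => ⟨hx, (hc x hx).trans h.symm⟩⟩
  · exact if_neg fun ⟨x, hx, hxt⟩ => h (hxt.symm.trans (hc x hx))

theorem IsRelOpenConvex.eventually_openEuler_slice (hU : IsRelOpenConvex U)
    (hb : Bornology.IsBounded U) (t : ℝ) :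
    ∀ᶠ ε : ℝ in 𝓝[>] 0,
      openEuler (levelSlice l U t) - openEuler (levelSlice l U (t + ε)) =
        if t = sInf (l '' U) then openEuler U else 0 := by
  have hlt : ∀ c : ℝ, t < c → ∀ᶠ ε : ℝ in 𝓝[>] 0, t + ε < c := fun c hc => by
    have : ∀ᶠ ε : ℝ in 𝓝 0, ε < c - t := eventually_lt_nhds (by linarith)
    filter_upwards [this.filter_mono nhdsWithin_le_nhds] with ε hε
    linarith
  have hpos : ∀ᶠ ε : ℝ in 𝓝[>] 0, (0 : ℝ) < ε := self_mem_nhdsWithin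
  rcases U.eq_empty_or_nonempty with rfl | ⟨x₀, hx₀⟩
  · refine Eventually.of_forall fun ε => ?_
    simp [levelSlice, openEuler_empty]
  by_cases hconst : ∀ x ∈ U, l x = l x₀
  · have himg : l '' U = {l x₀} := by
      ext p
      exact ⟨fun ⟨x, hx, h⟩ => h ▸ hconst x hx, fun h => ⟨x₀, hx₀, h.symm⟩⟩
    simp only [openEuler_slice_of_const l hconst, himg, csInf_singleton]
    rcases lt_or_ge t (l x₀) with h | h
    · filter_upwards [hlt _ h] with ε hε
      simp [h.ne, hε.ne]
    · filter_upwards [hpos] with ε hε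
      simp [(show t + ε ≠ l x₀ by linarith)]
  · push Not at hconst
    obtain ⟨x₁, hx₁, hne⟩ := hconst
    have himg : l '' U = Ioo (sInf (l '' U)) (sSup (l '' U)) := by
      rcases lt_or_gt_of_ne hne with h | h
      · exact hU.image_eq_Ioo l hb hx₁ hx₀ h
      · exact hU.image_eq_Ioo l hb hx₀ hx₁ h
    simp only [hU.openEuler_slice l hx₁ hx₀ hne]
    generalize sInf (l '' U) = α at *
    generalize sSup (l '' U) = β at *
    have hαβ : α < β := by
      have : l x₀ ∈ Ioo α β := himg ▸ mem_image_of_mem l hx₀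
      exact this.1.trans this.2
    simp only [himg, mem_Ioo]
    rcases lt_trichotomy t α with h | h | h
    · filter_upwards [hlt _ h] with ε hε
      simp [h.ne, h.not_gt, hε.not_gt]
    · filter_upwards [hlt β (h ▸ hαβ), hpos] with ε hε hε0
      simp [h ▸ hε, h, hε0]
    · rcases lt_or_ge t β with h' | h'
      · filter_upwards [hlt β h', hpos] with ε hε hε0
        simp [h, h', hε, h.ne', h.trans (lt_add_of_pos_right t hε0)]
      · filter_upwards [hpos] with ε hε0
        simp [h.ne', h'.not_gt, (h'.trans (lt_add_of_pos_right t hε0).le).not_gt]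

theorem openEuler_of_subset_singleton {c : EuclideanSpace ℝ (Fin n)} (h : U ⊆ {c}) :
    openEuler U = if c ∈ U then 1 else 0 := by
  rcases subset_singleton_iff_eq.1 h with rfl | rfl
  · simp [openEuler_empty]
  · have h0 : vectorSpan ℝ ({c} : Set (EuclideanSpace ℝ (Fin n))) = ⊥ := vectorSpan_singleton ℝ c
    rw [openEuler_of_nonempty (singleton_nonempty c), pdim, h0]
    simp

theorem sum_mul_openEuler_eq_zero_of_coord {ι : Type*} (s : Finset ι) (a : ι → ℤ) (k : ℕ)
    (hk : k ≤ n) :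
    ∀ (U : ι → Set (EuclideanSpace ℝ (Fin n))) (c : Fin n → ℝ),
      (∀ i ∈ s, IsRelOpenConvex (U i)) → (∀ i ∈ s, Bornology.IsBounded (U i)) →
      (∀ i ∈ s, ∀ x ∈ U i, ∀ j : Fin n, k ≤ j → x j = c j) →
      (∀ x, ∑ i ∈ s, (if x ∈ U i then a i else 0) = 0) →
      ∑ i ∈ s, a i * openEuler (U i) = 0 := by
  induction k with
  | zero =>
    intro U c _ _ hc h0
    rw [← h0 (WithLp.toLp 2 c)]
    refine Finset.sum_congr rfl fun i hi => ?_
    rw [openEuler_of_subset_singleton (c := WithLp.toLp 2 c), mul_ite, mul_one, mul_zero]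
    intro x hx
    ext j
    exact hc i hi x hx j (Nat.zero_le _)
  | succ k ih =>
    intro U c hU hb hc h0
    let l : StrongDual ℝ (EuclideanSpace ℝ (Fin n)) := EuclideanSpace.proj (⟨k, hk⟩ : Fin n)
    have hslice : ∀ t, ∑ i ∈ s, a i * openEuler (levelSlice l (U i) t) = 0 := fun t => by
      refine ih (by omega) (fun i => levelSlice l (U i) t) (Function.update c ⟨k, hk⟩ t)
        (fun i hi => (hU i hi).slice l t) (fun i hi => (hb i hi).subset fun x hx => hx.1) ?_ ?_
      · rintro i hi x ⟨hx, hxt⟩ j hj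
        by_cases hjk : j = ⟨k, hk⟩
        · subst hjk
          rw [Function.update_self]
          exact hxt
        · rw [Function.update_of_ne hjk]
          refine hc i hi x hx j ?_
          have : (j : ℕ) ≠ k := fun h => hjk (Fin.ext h)
          omega
      · intro x
        by_cases hxt : l x = t
        · refine Eq.trans ?_ (h0 x)
          refine Finset.sum_congr rfl fun i _ => ?_
          simp [levelSlice, hxt]
        · refine Finset.sum_eq_zero fun i _ => ?_
          simp [levelSlice, hxt]
    let T : Finset ℝ := s.image fun i => sInf (l '' U i)
    have hev : ∀ᶠ ε : ℝ in 𝓝[>] 0, ∀ i ∈ s, ∀ t ∈ T,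
        openEuler (levelSlice l (U i) t) - openEuler (levelSlice l (U i) (t + ε)) =
          if t = sInf (l '' U i) then openEuler (U i) else 0 := by
      rw [Finset.eventually_all]
      intro i hi
      rw [Finset.eventually_all]
      intro t _
      exact (hU i hi).eventually_openEuler_slice l (hb i hi) t
    obtain ⟨ε, hε⟩ := hev.exists
    calc ∑ i ∈ s, a i * openEuler (U i)
        = ∑ i ∈ s, ∑ t ∈ T, (a i * openEuler (levelSlice l (U i) t) -
            a i * openEuler (levelSlice l (U i) (t + ε))) := by
          refine Finset.sum_congr rfl fun i hi => ?_
          simp_rw [← mul_sub]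
          rw [← Finset.mul_sum, Finset.sum_congr rfl (hε i hi), Finset.sum_ite_eq',
            if_pos (Finset.mem_image_of_mem _ hi)]
      _ = 0 := by
          rw [Finset.sum_comm]
          simp [Finset.sum_sub_distrib, hslice]

/-- Additivity of the Euler characteristic: a linear relation between indicator functions of
bounded relatively open convex sets is also satisfied by their Euler characteristics. -/
theorem sum_mul_openEuler_eq_zero {ι : Type*} (s : Finset ι) (a : ι → ℤ)
    (U : ι → Set (EuclideanSpace ℝ (Fin n))) (hU : ∀ i ∈ s, IsRelOpenConvex (U i))
    (hb : ∀ i ∈ s, Bornology.IsBounded (U i))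
    (h0 : ∀ x, ∑ i ∈ s, (if x ∈ U i then a i else 0) = 0) :
    ∑ i ∈ s, a i * openEuler (U i) = 0 :=
  sum_mul_openEuler_eq_zero_of_coord s a n le_rfl U 0 hU hb
    (fun _ _ _ _ j hj => absurd j.2 hj.not_gt) h0

/-- The Euler characteristic of a disjoint union of relatively open convex sets. -/
theorem openEuler_eq_sum {ι : Type*} (s : Finset ι)
    (U : ι → Set (EuclideanSpace ℝ (Fin n))) (V : Set (EuclideanSpace ℝ (Fin n)))
    (hU : ∀ i ∈ s, IsRelOpenConvex (U i)) (hb : ∀ i ∈ s, Bornology.IsBounded (U i))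
    (hV : IsRelOpenConvex V) (hVb : Bornology.IsBounded V)
    (hsub : ∀ i ∈ s, U i ⊆ V) (hex : ∀ x ∈ V, ∃! i, i ∈ s ∧ x ∈ U i) :
    ∑ i ∈ s, openEuler (U i) = openEuler V := by
  have h := sum_mul_openEuler_eq_zero (Finset.insertNone s) (fun o => o.elim (-1) fun _ => 1)
    (fun o => o.elim V U)
    (by
      rintro (_ | i) hi
      exacts [hV, hU i (Finset.some_mem_insertNone.1 hi)])
    (by
      rintro (_ | i) hi
      exacts [hVb, hb i (Finset.some_mem_insertNone.1 hi)]) ?_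
  · simp only [Finset.sum_insertNone, Option.elim] at h
    simp only [one_mul] at h
    linarith
  · intro x
    rw [Finset.sum_insertNone]
    change (if x ∈ V then (-1 : ℤ) else 0) + ∑ i ∈ s, (if x ∈ U i then (1 : ℤ) else 0) = 0
    by_cases hx : x ∈ V
    · obtain ⟨i, ⟨hi, hxi⟩, huniq⟩ := hex x hx
      rw [Finset.sum_eq_single_of_mem i hi fun j hj hji =>
        if_neg fun hxj => hji (huniq j ⟨hj, hxj⟩)]
      simp [hx, hxi]
    · rw [Finset.sum_eq_zero fun i hi => if_neg fun hxi => hx (hsub i hi hxi)]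
      simp [hx]

end EulerCharacteristic

section Decomposition

variable {n : ℕ}

theorem IsPolytope.convex {P : Set (EuclideanSpace ℝ (Fin n))} (hP : IsPolytope P) :
    Convex ℝ P := by
  obtain ⟨V, rfl⟩ := hP
  exact convex_convexHull ℝ _

theorem IsPolytope.isCompact {P : Set (EuclideanSpace ℝ (Fin n))} (hP : IsPolytope P) :
    IsCompact P := by
  obtain ⟨V, rfl⟩ := hP
  exact V.finite_toSet.isCompact_convexHull ℝ

section OpenPiece

variable {C B : Set (EuclideanSpace ℝ (Fin n))}

theorem exists_add_smul_mem_intrinsicInterior_inter (hBo : IsOpen B)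
    {x : EuclideanSpace ℝ (Fin n)} (hx : x ∈ intrinsicInterior ℝ C ∩ B)
    {v : EuclideanSpace ℝ (Fin n)} (hv : v ∈ vectorSpan ℝ C) :
    ∃ ε : ℝ, 0 < ε ∧ x + ε • v ∈ intrinsicInterior ℝ C ∩ B := by
  have hcont : Continuous fun ε : ℝ => x + ε • v := by fun_prop
  have hB : ∀ᶠ ε : ℝ in 𝓝 0, x + ε • v ∈ B :=
    hcont.continuousAt.preimage_mem_nhds (hBo.mem_nhds (by simpa using hx.2))
  obtain ⟨ε, ⟨h1, h2⟩, hε⟩ :=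
    ((((eventually_add_smul_mem_intrinsicInterior hx.1 hv).and hB).filter_mono
      nhdsWithin_le_nhds).and (self_mem_nhdsWithin (a := (0 : ℝ)) (s := Ioi 0))).exists
  exact ⟨ε, hε, h1, h2⟩

theorem isRelOpenConvex_intrinsicInterior_inter (hC : Convex ℝ C) (hB : Convex ℝ B)
    (hBo : IsOpen B) : IsRelOpenConvex (intrinsicInterior ℝ C ∩ B) where
  convex := (convex_intrinsicInterior hC).inter hB
  exists_add_smul_mem _ hx _ hv := exists_add_smul_mem_intrinsicInterior_inter hBo hx
    (vectorSpan_mono ℝ (inter_subset_left.trans intrinsicInterior_subset) hv)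

theorem pdim_intrinsicInterior_inter (hBo : IsOpen B)
    (hne : (intrinsicInterior ℝ C ∩ B).Nonempty) :
    pdim (intrinsicInterior ℝ C ∩ B) = pdim C := by
  suffices h : vectorSpan ℝ (intrinsicInterior ℝ C ∩ B) = vectorSpan ℝ C by rw [pdim, h, pdim]
  refine le_antisymm (vectorSpan_mono ℝ (inter_subset_left.trans intrinsicInterior_subset)) ?_
  intro v hv
  obtain ⟨x, hx⟩ := hne
  obtain ⟨ε, hε, h⟩ := exists_add_smul_mem_intrinsicInterior_inter hBo hx hv
  have := sub_mem_vectorSpan hx h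
  rw [add_sub_cancel_left] at this
  exact (Submodule.smul_mem_iff _ hε.ne').1 this

end OpenPiece

namespace PolyDecomp

variable {P : Set (EuclideanSpace ℝ (Fin n))} (S : PolyDecomp n P)

/-- The cells whose relative interior lies in the relative interior of `P`. -/
noncomputable def interiorCells : Finset (Set (EuclideanSpace ℝ (Fin n))) :=
  S.cells.filter fun τ => intrinsicInterior ℝ τ ⊆ intrinsicInterior ℝ P

variable {S}

theorem subset_of_mem {τ : Set (EuclideanSpace ℝ (Fin n))} (hτ : τ ∈ S.cells) : τ ⊆ P := by
  rw [← S.cover]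
  exact subset_sUnion_of_mem hτ

theorem subset_of_mem_intrinsicInterior {τ ρ : Set (EuclideanSpace ℝ (Fin n))}
    (hτ : τ ∈ S.cells) (hρ : ρ ∈ S.cells) {x : EuclideanSpace ℝ (Fin n)}
    (hx : x ∈ intrinsicInterior ℝ τ) (hxρ : x ∈ ρ) : τ ⊆ ρ :=
  inter_eq_left.1 ((S.inter_face τ hτ ρ hρ).eq_of_mem_intrinsicInterior
    ⟨intrinsicInterior_subset hx, hxρ⟩ hx)

theorem exists_mem_intrinsicInterior {x : EuclideanSpace ℝ (Fin n)} (hx : x ∈ P) :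
    ∃ τ ∈ S.cells, x ∈ intrinsicInterior ℝ τ := by
  rw [← S.cover] at hx
  obtain ⟨τ₀, hτ₀, hxτ₀⟩ := hx
  obtain ⟨τ, hmin⟩ := Finset.exists_minimal (s := S.cells.filter fun τ => x ∈ τ)
    ⟨τ₀, Finset.mem_filter.2 ⟨hτ₀, hxτ₀⟩⟩
  obtain ⟨hτ, hxτ⟩ := Finset.mem_filter.1 hmin.prop
  refine ⟨τ, hτ, by_contra fun hxi => ?_⟩
  obtain ⟨l, hl, y, hy, hly⟩ :=
    exists_supporting_of_notMem_intrinsicInterior (S.polytope τ hτ).convex hxτ hxi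
  have hxF : x ∈ l.toExposed τ := ⟨hxτ, hl⟩
  have hF := S.face_mem τ hτ _ ContinuousLinearMap.toExposed.isExposed ⟨x, hxF⟩
  have hle := hmin.le_of_le (Finset.mem_filter.2 ⟨hF, hxF⟩) fun z hz => hz.1
  exact hly.not_ge ((hle hy).2 x hxτ)

theorem intrinsicInterior_subset_of_mem (hP : IsPolytope P) {τ : Set (EuclideanSpace ℝ (Fin n))}
    (hτ : τ ∈ S.cells) {x : EuclideanSpace ℝ (Fin n)} (hx : x ∈ intrinsicInterior ℝ τ)
    (hxP : x ∈ intrinsicInterior ℝ P) : intrinsicInterior ℝ τ ⊆ intrinsicInterior ℝ P := by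
  intro y hy
  by_contra hyP
  have hyτ := intrinsicInterior_subset hy
  obtain ⟨l, hl, z, hz, hlz⟩ :=
    exists_supporting_of_notMem_intrinsicInterior hP.convex (subset_of_mem hτ hyτ) hyP
  have hτl : l.toExposed τ = τ :=
    (ContinuousLinearMap.toExposed.isExposed (l := l) (A := τ)).eq_of_mem_intrinsicInterior
      ⟨hyτ, fun w hw => hl w (subset_of_mem hτ hw)⟩ hy
  have hxτ : x ∈ l.toExposed τ := by
    rw [hτl]
    exact intrinsicInterior_subset hx
  have hxF : x ∈ l.toExposed P :=
    ⟨intrinsicInterior_subset hxP,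
      fun w hw => (hl w hw).trans (hxτ.2 y hyτ)⟩
  have hFP := (ContinuousLinearMap.toExposed.isExposed (l := l) (A := P)).eq_of_mem_intrinsicInterior hxF hxP
  have hzF : z ∈ l.toExposed P := by rwa [hFP]
  exact hlz.not_ge (hzF.2 y (subset_of_mem hτ hyτ))

theorem sum_interiorCells_inter (hP : IsPolytope P) {B : Set (EuclideanSpace ℝ (Fin n))}
    (hB : Convex ℝ B) (hBo : IsOpen B) (hne : (intrinsicInterior ℝ P ∩ B).Nonempty) :
    ∑ τ ∈ S.interiorCells.filter fun τ => (intrinsicInterior ℝ τ ∩ B).Nonempty,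
      (-1 : ℤ) ^ pdim τ = (-1) ^ pdim P := by
  have hbdd : ∀ C : Set (EuclideanSpace ℝ (Fin n)), IsPolytope C →
      Bornology.IsBounded (intrinsicInterior ℝ C ∩ B) := fun C hC =>
    hC.isCompact.isBounded.subset (inter_subset_left.trans intrinsicInterior_subset)
  have hcell : ∀ τ ∈ S.interiorCells, τ ∈ S.cells := fun τ hτ => (Finset.mem_filter.1 hτ).1
  have h := openEuler_eq_sum S.interiorCells (fun τ => intrinsicInterior ℝ τ ∩ B)
    (intrinsicInterior ℝ P ∩ B)
    (fun τ hτ => isRelOpenConvex_intrinsicInterior_inter (S.polytope τ (hcell τ hτ)).convex hB hBo)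
    (fun τ hτ => hbdd τ (S.polytope τ (hcell τ hτ)))
    (isRelOpenConvex_intrinsicInterior_inter hP.convex hB hBo) (hbdd P hP)
    (fun τ hτ => inter_subset_inter_left _ (Finset.mem_filter.1 hτ).2) ?_
  · rw [openEuler_of_nonempty hne, pdim_intrinsicInterior_inter hBo hne] at h
    rw [← h, Finset.sum_filter]
    refine Finset.sum_congr rfl fun τ _ => ?_
    split_ifs with hτ
    · rw [openEuler_of_nonempty hτ, pdim_intrinsicInterior_inter hBo hτ]
    · exact (if_neg hτ).symm
  · rintro x ⟨hx, hxB⟩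
    obtain ⟨τ, hτ, hxτ⟩ := exists_mem_intrinsicInterior (S := S) (intrinsicInterior_subset hx)
    refine ⟨τ, ⟨Finset.mem_filter.2 ⟨hτ, intrinsicInterior_subset_of_mem hP hτ hxτ hx⟩,
      hxτ, hxB⟩, ?_⟩
    rintro ρ ⟨hρ, hxρ, -⟩
    exact Subset.antisymm
      (subset_of_mem_intrinsicInterior (hcell ρ hρ) hτ hxρ (intrinsicInterior_subset hxτ))
      (subset_of_mem_intrinsicInterior hτ (hcell ρ hρ) hxτ (intrinsicInterior_subset hxρ))

theorem sum_interiorCells (hP : IsPolytope P) (hne : P.Nonempty) :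
    ∑ τ ∈ S.interiorCells, (-1 : ℤ) ^ pdim τ = (-1) ^ pdim P := by
  rw [← sum_interiorCells_inter (S := S) hP convex_univ isOpen_univ
    (by simpa using hne.intrinsicInterior hP.convex), Finset.filter_true_of_mem]
  intro τ hτ
  have hτ' := (Finset.mem_filter.1 hτ).1
  simpa using (S.nonempty τ hτ').intrinsicInterior (S.polytope τ hτ').convex

theorem sum_interiorCells_superset (hP : IsPolytope P) {F : Set (EuclideanSpace ℝ (Fin n))}
    (hF : F ∈ S.cells) :
    ∑ τ ∈ S.interiorCells.filter fun τ => F ⊆ τ, (-1 : ℤ) ^ pdim τ = (-1) ^ pdim P := by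
  obtain ⟨x, hx⟩ := (S.nonempty F hF).intrinsicInterior (S.polytope F hF).convex
  have hxF := intrinsicInterior_subset hx
  let K := ⋃ τ ∈ S.cells.filter fun τ => x ∉ τ, τ
  have hK : IsClosed K := isClosed_biUnion_finset fun τ hτ =>
    (S.polytope τ (Finset.mem_filter.1 hτ).1).isCompact.isClosed
  have hxK : x ∈ Kᶜ := by simp [K]
  obtain ⟨r, hr, hball⟩ := Metric.isOpen_iff.1 hK.isOpen_compl x hxK
  have hmeet : ∀ C, IsPolytope C → x ∈ C → (intrinsicInterior ℝ C ∩ Metric.ball x r).Nonempty := by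
    intro C hC hxC
    rw [inter_comm]
    exact mem_closure_iff.1 (subset_closure_intrinsicInterior hC.convex hxC) _ Metric.isOpen_ball
      (Metric.mem_ball_self hr)
  rw [← sum_interiorCells_inter (S := S) hP (convex_ball x r) Metric.isOpen_ball
    (hmeet P hP (subset_of_mem hF hxF))]
  refine Finset.sum_congr (Finset.filter_congr fun τ hτ => ?_) fun _ _ => rfl
  have hτ' := (Finset.mem_filter.1 hτ).1
  refine ⟨fun h => hmeet τ (S.polytope τ hτ') (h hxF), fun ⟨y, hyτ, hyB⟩ => ?_⟩
  refine subset_of_mem_intrinsicInterior hF hτ' hx (by_contra fun hxτ => hball hyB ?_)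
  exact mem_biUnion (Finset.mem_coe.2 (Finset.mem_filter.2 ⟨hτ', hxτ⟩))
    (intrinsicInterior_subset hyτ)

end PolyDecomp

/-- If all upper sums of `g` over a finite partially ordered set with top element agree, then `g`
is concentrated at the top. -/
theorem eq_ite_of_sum_upper_eq {α : Type*} [PartialOrder α] (s : Finset α) {m : α} (hm : m ∈ s)
    (hle : ∀ a ∈ s, a ≤ m) (g : α → ℤ) (c : ℤ)
    (hg : ∀ a ∈ s, ∑ b ∈ s.filter (a ≤ ·), g b = c) {a : α} (ha : a ∈ s) :
    g a = if a = m then c else 0 := by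
  induction h : (s.filter (a < ·)).card using Nat.strong_induction_on generalizing a with
  | _ N ih =>
    have hins : s.filter (a ≤ ·) = insert a (s.filter (a < ·)) := by
      ext b
      simp only [Finset.mem_filter, Finset.mem_insert, le_iff_eq_or_lt]
      constructor
      · rintro ⟨hb, rfl | hab⟩
        exacts [Or.inl rfl, Or.inr ⟨hb, hab⟩]
      · rintro (rfl | ⟨hb, hab⟩)
        exacts [⟨ha, Or.inl rfl⟩, ⟨hb, Or.inr hab⟩]
    have hsum := hg a ha
    rw [hins, Finset.sum_insert (by simp)] at hsum
    have hupper : ∀ b ∈ s.filter (a < ·), g b = if b = m then c else 0 := by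
      intro b hb
      obtain ⟨hbs, hab⟩ := Finset.mem_filter.1 hb
      refine ih _ ?_ hbs rfl
      rw [← h]
      refine Finset.card_lt_card ((Finset.ssubset_iff_of_subset ?_).2 ⟨b, hb, by simp⟩)
      exact Finset.monotone_filter_right _ fun _ _ => hab.trans
    rw [Finset.sum_congr rfl hupper, Finset.sum_ite_eq'] at hsum
    split_ifs with ham
    · subst ham
      rwa [if_neg (by simp), add_zero] at hsum
    · rw [if_pos (Finset.mem_filter.2 ⟨hm, lt_of_le_of_ne (hle a ha) ham⟩)] at hsum
      linarith

end Decomposition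

/-- **(Lemma on Möbius-type sums over polyhedral decompositions.)**  Let `P` be a
`d`-dimensional polytope, `S` a polyhedral decomposition of `P`, and `σ` a proper (possibly
empty) face of `P` which is a face of `S`.  Then for any (possibly empty) face `σ'` of `σ`, the
sum of `(−1)^(dim τ)` over the cells `τ` of `S` whose relative interior lies in the relative
interior of `P` and which satisfy `τ ∩ σ = σ'` equals `(−1)^d` if `σ' = σ`, and `0`
otherwise. -/
theorem mobius_sum_polyhedral_decomposition {n d : ℕ}
    (P : Set (EuclideanSpace ℝ (Fin n))) (hP : IsPolytope P) (hPd : pdim P = d)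
    (S : PolyDecomp n P)
    (σ : Set (EuclideanSpace ℝ (Fin n))) (hσ : IsExposed ℝ P σ) (hσne : σ ≠ P)
    (hσS : σ.Nonempty → σ ∈ S.cells)
    (σ' : Set (EuclideanSpace ℝ (Fin n))) (hσ' : IsExposed ℝ σ σ') :
    ∑ τ ∈ S.cells.filter
        (fun τ => intrinsicInterior ℝ τ ⊆ intrinsicInterior ℝ P ∧ τ ∩ σ = σ'),
      (-1 : ℤ) ^ pdim τ = if σ' = σ then (-1 : ℤ) ^ d else 0 := by
  subst hPd
  have hPne : P.Nonempty := by
    by_contra h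
    obtain rfl := not_nonempty_iff_eq_empty.1 h
    exact hσne (subset_empty_iff.1 hσ.subset)
  have hface : ∀ τ ∈ S.cells, IsExposed ℝ σ (τ ∩ σ) := by
    intro τ hτ
    rcases σ.eq_empty_or_nonempty with rfl | hne
    · simpa using IsExposed.refl (𝕜 := ℝ) (∅ : Set (EuclideanSpace ℝ (Fin n)))
    · rw [inter_comm]
      exact S.inter_face σ (hσS hne) τ hτ
  have hupper : ∀ F, IsExposed ℝ σ F →
      ∑ τ ∈ S.interiorCells.filter fun τ => F ⊆ τ, (-1 : ℤ) ^ pdim τ = (-1) ^ pdim P := by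
    intro F hF
    rcases F.eq_empty_or_nonempty with rfl | hne
    · simpa using PolyDecomp.sum_interiorCells (S := S) hP hPne
    · exact PolyDecomp.sum_interiorCells_superset hP
        (S.face_mem σ (hσS (hne.mono hF.subset)) F hF hne)
  let s := insert σ' (insert σ (S.cells.image fun τ => τ ∩ σ))
  have hs : ∀ F ∈ s, IsExposed ℝ σ F := by
    intro F hF
    simp only [s, Finset.mem_insert, Finset.mem_image] at hF
    obtain rfl | rfl | ⟨τ, hτ, rfl⟩ := hF
    exacts [hσ', IsExposed.refl _, hface τ hτ]
  have hmain := eq_ite_of_sum_upper_eq s (m := σ) (by simp [s]) (fun F hF => (hs F hF).subset)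
    (fun F => ∑ τ ∈ S.interiorCells.filter (fun τ => τ ∩ σ = F), (-1 : ℤ) ^ pdim τ)
    ((-1) ^ pdim P) ?_ (a := σ') (by simp [s])
  · rw [PolyDecomp.interiorCells, Finset.filter_filter] at hmain
    convert hmain
  · intro F hF
    rw [← hupper F (hs F hF)]
    have hmaps : ∀ τ ∈ S.interiorCells.filter (fun τ => F ⊆ τ), τ ∩ σ ∈ s.filter (F ≤ ·) := by
      intro τ hτ
      obtain ⟨hτ, hFτ⟩ := Finset.mem_filter.1 hτ
      refine Finset.mem_filter.2 ⟨?_, subset_inter hFτ (hs F hF).subset⟩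
      exact Finset.mem_insert_of_mem (Finset.mem_insert_of_mem
        (Finset.mem_image_of_mem _ (Finset.mem_filter.1 hτ).1))
    rw [← Finset.sum_fiberwise_of_maps_to hmaps]
    refine Finset.sum_congr rfl fun G hG => ?_
    rw [Finset.filter_filter]
    refine Finset.sum_congr (Finset.filter_congr fun τ _ => ?_) fun _ _ => rfl
    refine ⟨fun h => ⟨?_, h⟩, fun h => h.2⟩
    exact (Finset.mem_filter.1 hG).2.trans (h ▸ inter_subset_left)
end

section
/- Let P be a lattice polytope of dimension n in a lattice M, with Ehrhart polynomial f_P(m) = #(mP ∩ M). Then the generating series Σ_{m ≥ 0} f_P(m) t^m equals h*_P(t)/(1−t)^{n+1}, where h*_P(t) is a polynomial of degree at most n with nonnegative integer coefficients. -/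
open scoped Pointwise

/-- A subfamily of `v` that is a basis, recorded by its index set together with the coordinate map
it induces, extended by zero to all indices. -/
structure SimplicialChart {ι E : Type*} [Fintype ι] [DecidableEq ι] [AddCommGroup E] [Module ℝ E]
    (v : ι → E) where
  support : Finset ι
  coord : E →ₗ[ℝ] (ι → ℝ)
  coord_of_notMem : ∀ x, ∀ i ∉ support, coord x i = 0
  sum_coord : ∀ x, ∑ i, coord x i • v i = x
  coord_self : ∀ i ∈ support, coord (v i) = Pi.single i 1

theorem exists_ratio {ι : Type*} [Fintype ι] {c g : ι → ℝ} (hc : ∀ i, 0 ≤ c i) (hg : ∃ i, 0 < g i) :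
    ∃ t : ℝ, 0 ≤ t ∧ (∀ i, 0 ≤ c i - t * g i) ∧ ∃ j, 0 < g j ∧ c j - t * g j = 0 := by
  obtain ⟨i₀, hi₀⟩ := hg
  obtain ⟨j, hj, hmin⟩ := Finset.exists_min_image (Finset.univ.filter fun i => 0 < g i)
    (fun i => c i / g i) ⟨i₀, by simpa using hi₀⟩
  simp only [Finset.mem_filter, Finset.mem_univ, true_and] at hj hmin
  refine ⟨c j / g j, div_nonneg (hc j) hj.le, fun i => ?_, j, hj, by field_simp; ring⟩
  rcases lt_or_ge 0 (g i) with h | h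
  · have := (le_div_iff₀ h).1 (hmin i h)
    linarith
  · have := mul_nonpos_of_nonneg_of_nonpos (div_nonneg (hc j) hj.le) h
    linarith [hc i]

section Chart

variable {ι E : Type*} [Fintype ι] [DecidableEq ι] [AddCommGroup E] [Module ℝ E] {v : ι → E}

namespace SimplicialChart

theorem coord_sum (B : SimplicialChart v) {c : ι → ℝ} (hc : ∀ i ∉ B.support, c i = 0) :
    B.coord (∑ i, c i • v i) = c := by
  have h : ∀ i, B.coord (c i • v i) = Pi.single i (c i) := by
    intro i
    by_cases hi : i ∈ B.support
    · rw [map_smul, B.coord_self i hi, ← Pi.single_smul, smul_eq_mul, mul_one]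
    · simp [hc i hi]
  rw [map_sum, Finset.sum_congr rfl fun i _ => h i, Finset.univ_sum_single]

theorem support_injective : Function.Injective (support : SimplicialChart v → Finset ι) := by
  intro B C h
  have hcoord : B.coord = C.coord := by
    ext1 x
    conv_lhs => rw [← C.sum_coord x]
    exact B.coord_sum fun i hi => C.coord_of_notMem x i (h ▸ hi)
  cases B
  cases C
  simp_all

instance : Finite (SimplicialChart v) := Finite.of_injective _ support_injective

theorem span_support (B : SimplicialChart v) : Submodule.span ℝ (v '' B.support) = ⊤ := by
  refine eq_top_iff.2 fun x _ => ?_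
  rw [← B.sum_coord x]
  refine Submodule.sum_mem _ fun i _ => ?_
  by_cases hi : i ∈ B.support
  · exact Submodule.smul_mem _ _ (Submodule.subset_span ⟨i, hi, rfl⟩)
  · simp [B.coord_of_notMem x i hi]

theorem linearIndependent (B : SimplicialChart v) :
    LinearIndependent ℝ (fun i : B.support => v i) := by
  rw [Fintype.linearIndependent_iff]
  intro g hg i
  have h := B.coord_sum (c := fun j => if hj : j ∈ B.support then g ⟨j, hj⟩ else 0)
    (fun j hj => by simp [hj])
  have h0 : ∑ j, (if hj : j ∈ B.support then g ⟨j, hj⟩ else 0) • v j = 0 := by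
    rw [← hg, ← Finset.sum_subset (Finset.subset_univ B.support) (fun j _ hj => by simp [hj]),
      ← Finset.sum_coe_sort]
    exact Finset.sum_congr rfl fun j _ => by simp
  rw [h0, map_zero] at h
  have := congrFun h i
  simpa using this.symm

theorem card_support (B : SimplicialChart v) : B.support.card = Module.finrank ℝ E := by
  have hr : Set.range (fun i : B.support => v i) = v '' B.support := by
    ext; simp
  have := finrank_span_eq_card B.linearIndependent
  rw [hr, B.span_support, finrank_top] at this
  simpa using this.symm

theorem exists_of_span_eq_top {T : Finset ι} (hT : Submodule.span ℝ (v '' T) = ⊤)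
    (hcard : T.card ≤ Module.finrank ℝ E) : ∃ B : SimplicialChart v, B.support = T := by
  have hr : Set.range (fun i : T => v i) = v '' T := by
    ext; simp
  have hle := finrank_range_le_card (R := ℝ) (fun i : T => v i)
  rw [Set.finrank, hr, hT, finrank_top, Fintype.card_coe] at hle
  have hli : LinearIndependent ℝ (fun i : T => v i) :=
    linearIndependent_of_top_le_span_of_card_eq_finrank (by rw [hr, hT])
      (by rw [Fintype.card_coe]; omega)
  let b := Module.Basis.mk hli (by rw [hr, hT])
  refine ⟨⟨T, LinearMap.pi fun i => if h : i ∈ T then b.coord ⟨i, h⟩ else 0, ?_, ?_, ?_⟩, rfl⟩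
  · intro x i hi
    simp [hi]
  · intro x
    rw [← Finset.sum_subset (Finset.subset_univ T) (fun j _ hj => by simp [hj]),
      ← Finset.sum_coe_sort]
    conv_rhs => rw [← b.sum_repr x]
    exact Finset.sum_congr rfl fun j _ => by simp [b]
  · intro i hi
    have hb : v i = b ⟨i, hi⟩ := by simp [b]
    ext j
    by_cases hj : j ∈ T
    · by_cases hij : j = i
      · subst hij; simp [hj, hb]
      · simp [hj, hb, hij]
    · have hij : j ≠ i := fun h => hj (h ▸ hi)
      simp [hj, hij]

/-- The linear functional taking the prescribed values `ω` on the basis. -/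
noncomputable def cost (B : SimplicialChart v) (ω : ι → ℝ) : E →ₗ[ℝ] ℝ :=
  Fintype.linearCombination ℝ ω ∘ₗ B.coord

theorem cost_apply (B : SimplicialChart v) (ω : ι → ℝ) (x : E) :
    B.cost ω x = ∑ i, B.coord x i * ω i := by
  simp [cost, Fintype.linearCombination_apply]

theorem cost_self (B : SimplicialChart v) (ω : ι → ℝ) {i : ι} (hi : i ∈ B.support) :
    B.cost ω (v i) = ω i := by
  rw [cost_apply, B.coord_self i hi]
  simp [Pi.single_apply]

end SimplicialChart

theorem sum_smul_mem_span {c : ι → ℝ} {T : Finset ι} (hc : ∀ i ∉ T, c i = 0) :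
    ∑ i, c i • v i ∈ Submodule.span ℝ (v '' T) := by
  refine Submodule.sum_mem _ fun i _ => ?_
  by_cases hi : i ∈ T
  · exact Submodule.smul_mem _ _ (Submodule.subset_span ⟨i, hi, rfl⟩)
  · simp [hc i hi]

/-- Carathéodory's theorem for cones. -/
theorem exists_conic_combination_card_le [FiniteDimensional ℝ E] (c : ι → ℝ)
    (hc : ∀ i, 0 ≤ c i) :
    ∃ c' : ι → ℝ, (∀ i, 0 ≤ c' i) ∧ ∑ i, c' i • v i = ∑ i, c i • v i ∧
      (Finset.univ.filter fun i => c' i ≠ 0).card ≤ Module.finrank ℝ E := by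
  induction hn : (Finset.univ.filter fun i => c i ≠ 0).card using Nat.strong_induction_on
    generalizing c with
  | _ n ih =>
    by_cases hle : (Finset.univ.filter fun i => c i ≠ 0).card ≤ Module.finrank ℝ E
    · exact ⟨c, hc, rfl, hle⟩
    set T := Finset.univ.filter fun i => c i ≠ 0 with hT
    have hdep : ¬ LinearIndependent ℝ (fun i : T => v i) := fun h =>
      hle (by simpa using h.fintype_card_le_finrank)
    obtain ⟨g₀, hg₀, ⟨j₀, hj₀⟩, hj₀'⟩ := Fintype.not_linearIndependent_iff.1 hdep
    have key : ∃ g : ι → ℝ, (∀ i ∉ T, g i = 0) ∧ ∑ i, g i • v i = 0 ∧ ∃ i, 0 < g i := by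
      let g : ι → ℝ := fun i => if h : i ∈ T then g₀ ⟨i, h⟩ else 0
      have hgT : ∀ i ∉ T, g i = 0 := fun i hi => by simp [g, hi]
      have hsum : ∑ i, g i • v i = 0 := by
        rw [← hg₀, ← Finset.sum_subset (Finset.subset_univ T) (fun j _ hj => by simp [hgT j hj]),
          ← Finset.sum_coe_sort]
        exact Finset.sum_congr rfl fun j _ => by simp only [g, j.2, dif_pos]
      have hne : g j₀ ≠ 0 := by simpa only [g, hj₀, dif_pos] using hj₀'
      rcases hne.lt_or_gt with h | h
      · exact ⟨-g, fun i hi => by simp [hgT i hi], by simp [hsum], j₀, by simpa using h⟩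
      · exact ⟨g, hgT, hsum, j₀, h⟩
    obtain ⟨g, hgT, hsum, hpos⟩ := key
    obtain ⟨t, -, hnn, j, hj, hj0⟩ := exists_ratio hc hpos
    have hlt : (Finset.univ.filter fun i => c i - t * g i ≠ 0).card < n := by
      rw [← hn]
      refine Finset.card_lt_card (Finset.ssubset_iff_subset_ne.2 ⟨fun i hi => ?_, fun h => ?_⟩)
      · by_contra hiT
        have : c i = 0 := by simpa [hT] using hiT
        simp [this, hgT i hiT] at hi
      · have hjT : j ∈ T := by
          by_contra hjT
          exact hj.ne' (hgT j hjT)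
        rw [← h] at hjT
        simp [hj0] at hjT
    obtain ⟨c', h1, h2, h3⟩ := ih _ hlt (fun i => c i - t * g i) hnn rfl
    refine ⟨c', h1, h2.trans ?_, h3⟩
    simp [sub_smul, mul_smul, ← Finset.smul_sum, hsum]

theorem SimplicialChart.exists_of_conic_combination {c : ι → ℝ}
    (hc : ∀ i, 0 ≤ c i)
    (hgen : ∀ T : Finset ι, ∑ i, c i • v i ∈ Submodule.span ℝ (v '' T) →
      Submodule.span ℝ (v '' T) = ⊤)
    (hcard : (Finset.univ.filter fun i => c i ≠ 0).card ≤ Module.finrank ℝ E) :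
    ∃ B : SimplicialChart v, B.coord (∑ i, c i • v i) = c ∧ ∀ i ∈ B.support, 0 < c i := by
  have h0 : ∀ i ∉ Finset.univ.filter (fun i => c i ≠ 0), c i = 0 := fun i hi => by simpa using hi
  obtain ⟨B, hB⟩ := exists_of_span_eq_top (hgen _ (sum_smul_mem_span h0)) hcard
  refine ⟨B, B.coord_sum (by rwa [hB]), fun i hi => (hc i).lt_of_ne' ?_⟩
  rw [hB] at hi
  simpa using hi

/-- A generic point of the cone lies in the interior of a simplicial cone that is optimal for the
cost `ω`. -/
theorem SimplicialChart.exists_optimal [FiniteDimensional ℝ E] {ht : E →ₗ[ℝ] ℝ}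
    (hht : ∀ i, ht (v i) = 1) (ω : ι → ℝ) {c : ι → ℝ} (hc : ∀ i, 0 ≤ c i)
    {y : E} (hy : ∑ i, c i • v i = y)
    (hgen : ∀ T : Finset ι, y ∈ Submodule.span ℝ (v '' T) → Submodule.span ℝ (v '' T) = ⊤) :
    ∃ B : SimplicialChart v, (∀ i ∈ B.support, 0 < B.coord y i) ∧ ∀ i, B.cost ω (v i) ≤ ω i := by
  obtain ⟨c₀, hc₀, hsum₀, hcard₀⟩ := exists_conic_combination_card_le (v := v) c hc
  rw [hy] at hsum₀
  obtain ⟨B₀, hB₀, hpos₀⟩ := exists_of_conic_combination hc₀ (by rwa [hsum₀]) hcard₀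
  rw [hsum₀] at hB₀
  obtain ⟨B, hB, hmin⟩ := Set.exists_min_image
    {B : SimplicialChart v | ∀ i ∈ B.support, 0 < B.coord y i} (fun B => B.cost ω y)
    (Set.toFinite _) ⟨B₀, by simpa [hB₀] using hpos₀⟩
  simp only [Set.mem_ofPred_eq] at hB hmin
  refine ⟨B, hB, fun k => ?_⟩
  by_contra! hk
  have hkB : k ∉ B.support := fun h => hk.ne' (B.cost_self ω h)
  have hBy : ∀ i, 0 ≤ B.coord y i := fun i => by
    by_cases hi : i ∈ B.support
    · exact (hB i hi).le
    · rw [B.coord_of_notMem y i hi]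
  let g : ι → ℝ := B.coord (v k) - Pi.single k 1
  have hgk : g k = -1 := by simp [g, B.coord_of_notMem _ _ hkB]
  have hgi : ∀ i, i ≠ k → g i = B.coord (v k) i := fun i hi => by simp [g, hi]
  have hg0 : ∑ i, g i • v i = 0 := by
    simp [g, sub_smul, B.sum_coord, Pi.single_apply]
  have hg1 : ∃ i, 0 < g i := by
    by_contra! hle
    have h1 : ∑ i, g i = 0 := by
      have := congrArg ht hg0
      simpa [hht] using this
    have h2 : ∑ i, g i < ∑ _i : ι, (0 : ℝ) :=
      Finset.sum_lt_sum (fun i _ => hle i) ⟨k, Finset.mem_univ _, by rw [hgk]; norm_num⟩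
    simp [h1] at h2
  obtain ⟨t, ht0, hnn, j, hj, hj0⟩ := exists_ratio hBy hg1
  have hjk : j ≠ k := by
    rintro rfl
    linarith
  have hjB : j ∈ B.support := by
    by_contra h
    rw [hgi j hjk, B.coord_of_notMem _ _ h] at hj
    exact lt_irrefl _ hj
  have htpos : 0 < t := ht0.lt_of_ne fun h => by
    rw [← h, zero_mul, sub_zero] at hj0
    exact (hB j hjB).ne' hj0
  have hsum : ∑ i, (B.coord y i - t * g i) • v i = y := by
    simp [sub_smul, mul_smul, ← Finset.smul_sum, hg0, B.sum_coord]
  have hcard : (Finset.univ.filter fun i => B.coord y i - t * g i ≠ 0).card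
      ≤ Module.finrank ℝ E := by
    rw [← B.card_support]
    calc _ ≤ (insert k (B.support.erase j)).card := by
          refine Finset.card_le_card fun i hi => ?_
          simp only [Finset.mem_filter, Finset.mem_univ, true_and] at hi
          rw [Finset.mem_insert, Finset.mem_erase]
          by_contra! h
          have hij : i ≠ j := by
            rintro rfl
            exact hi hj0
          have hiB := h.2 hij
          exact hi (by rw [hgi i h.1, B.coord_of_notMem _ _ hiB, B.coord_of_notMem _ _ hiB]; simp)
      _ ≤ (B.support.erase j).card + 1 := Finset.card_insert_le _ _
      _ = B.support.card := Finset.card_erase_add_one hjB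
  obtain ⟨C, hC, hCpos⟩ := exists_of_conic_combination hnn (by rwa [hsum]) hcard
  rw [hsum] at hC
  have hle := hmin C (by rw [hC]; exact hCpos)
  have hcost : C.cost ω y = B.cost ω y - t * (B.cost ω (v k) - ω k) := by
    rw [C.cost_apply, hC, B.cost_apply, B.cost_apply]
    simp only [g, Pi.sub_apply, sub_mul, Finset.sum_sub_distrib, mul_assoc, ← Finset.mul_sum]
    simp [Pi.single_apply, mul_sub]
  have := mul_pos htpos (sub_pos.2 hk)
  linarith

end Chart

theorem exists_pos_forall_notMem {ι κ : Type*} [Finite ι] [Finite κ] (U : κ → Submodule ℝ (ι → ℝ))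
    (hU : ∀ k, U k ≠ ⊤) : ∃ c : ι → ℝ, (∀ i, 0 < c i) ∧ ∀ k, c ∉ U k := by
  cases nonempty_fintype ι
  have hd : Dense (⋂ k, ((U k : Set (ι → ℝ)))ᶜ) := by
    refine dense_iInter_of_isOpen (fun k => (U k).closed_of_finiteDimensional.isOpen_compl)
      fun k => interior_eq_empty_iff_dense_compl.1 ?_
    by_contra h
    exact hU k (Submodule.eq_top_of_nonempty_interior' _ (Set.nonempty_iff_ne_empty.2 h))
  obtain ⟨c, hc, hc'⟩ := hd.exists_mem_open
    (isOpen_set_pi (Set.finite_univ (α := ι)) fun _ _ => isOpen_Ioi (a := (0 : ℝ)))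
    ⟨fun _ => 1, fun _ _ => by simp⟩
  exact ⟨c, fun i => hc' i (Set.mem_univ i), by simpa using hc⟩

section Generic

variable {ι E : Type*} [AddCommGroup E] [Module ℝ E] {v : ι → E}

theorem exists_generic_conic_combination [Fintype ι]
    (hv : Submodule.span ℝ (Set.range v) = ⊤) :
    ∃ c : ι → ℝ, (∀ i, 0 < c i) ∧ ∀ T : Finset ι,
      ∑ i, c i • v i ∈ Submodule.span ℝ (v '' T) → Submodule.span ℝ (v '' T) = ⊤ := by
  have hsurj : Function.Surjective (Fintype.linearCombination ℝ v) := by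
    rw [← LinearMap.range_eq_top, Fintype.range_linearCombination, hv]
  obtain ⟨c, hc, hc'⟩ := exists_pos_forall_notMem
    (fun T : {T : Finset ι // Submodule.span ℝ (v '' T) ≠ ⊤} =>
      (Submodule.span ℝ (v '' T.1)).comap (Fintype.linearCombination ℝ v))
    fun T h => T.2 (by
      rw [← Submodule.map_comap_eq_of_surjective hsurj (Submodule.span ℝ (v '' T.1)), h,
        Submodule.map_top, LinearMap.range_eq_top.2 hsurj])
  refine ⟨c, hc, fun T hT => ?_⟩
  by_contra h
  exact hc' ⟨T, h⟩ (by simpa [Fintype.linearCombination_apply] using hT)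

open Filter Topology in
theorem eventually_generic [Finite ι] {x q : E}
    (hq : ∀ T : Finset ι, q ∈ Submodule.span ℝ (v '' T) → Submodule.span ℝ (v '' T) = ⊤) :
    ∀ᶠ ε : ℝ in 𝓝[>] 0, ∀ T : Finset ι, x + ε • q ∈ Submodule.span ℝ (v '' T) →
      Submodule.span ℝ (v '' T) = ⊤ := by
  rw [eventually_all]
  intro T
  by_cases hT : q ∈ Submodule.span ℝ (v '' T)
  · exact Eventually.of_forall fun _ _ => hq T hT
  by_cases h : ∃ a : ℝ, x + a • q ∈ Submodule.span ℝ (v '' T)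
  · obtain ⟨a, ha⟩ := h
    have hne : ∀ᶠ ε : ℝ in 𝓝[>] 0, ε ≠ a := by
      rcases eq_or_ne a 0 with rfl | h0
      · filter_upwards [self_mem_nhdsWithin] with ε hε using ne_of_gt hε
      · exact (eventually_ne_nhds h0.symm).filter_mono nhdsWithin_le_nhds
    filter_upwards [hne] with ε hε hmem
    refine absurd ?_ hT
    have hsub := Submodule.sub_mem _ hmem ha
    rw [add_sub_add_left_eq_sub, ← sub_smul] at hsub
    exact (Submodule.smul_mem_iff _ (sub_ne_zero.2 hε)).1 hsub
  · push Not at h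
    exact Eventually.of_forall fun ε hε => absurd hε (h ε)

open Filter Topology in
theorem eventually_pos_iff (a : ℝ) {b : ℝ} (hb : b ≠ 0) :
    ∀ᶠ ε : ℝ in 𝓝[>] 0, (0 < a + ε * b ↔ 0 ≤ a ∧ (b < 0 → 0 < a)) := by
  have hlim : Tendsto (fun ε : ℝ => a + ε * b) (𝓝[>] 0) (𝓝 a) := by
    have : ContinuousAt (fun ε : ℝ => a + ε * b) 0 := by fun_prop
    simpa using this.tendsto.mono_left (nhdsWithin_le_nhds (s := Set.Ioi 0))
  rcases lt_trichotomy a 0 with ha | rfl | ha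
  · filter_upwards [hlim.eventually_lt_const ha] with ε h
    exact ⟨fun h' => absurd h' h.not_gt, fun h' => absurd h'.1 ha.not_ge⟩
  · filter_upwards [self_mem_nhdsWithin] with ε hε
    have hε : 0 < ε := hε
    simp [hε, hb.symm.le_iff_lt]
  · filter_upwards [hlim.eventually_const_lt ha] with ε h
    simp [h, ha, ha.le]

end Generic

section Decomposition

variable {ι E : Type*} [Fintype ι] [DecidableEq ι] [AddCommGroup E] [Module ℝ E] {v : ι → E}

theorem exists_generic_cost (v : ι → E) :
    ∃ ω : ι → ℝ, ∀ B : SimplicialChart v, ∀ i, B.cost ω (v i) = ω i → i ∈ B.support := by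
  obtain ⟨ω, -, hω⟩ := exists_pos_forall_notMem
    (fun p : {p : SimplicialChart v × ι // p.2 ∉ p.1.support} =>
      LinearMap.ker (Fintype.linearCombination ℝ (p.1.1.coord (v p.1.2)) -
        LinearMap.proj (R := ℝ) (φ := fun _ : ι => ℝ) p.1.2))
    fun ⟨⟨B, i⟩, hi⟩ h => by
      have := LinearMap.mem_ker.1 (h.ge (Submodule.mem_top (x := Pi.single i (1 : ℝ))))
      have hi' : B.coord (v i) i = 0 := B.coord_of_notMem _ _ hi
      simp [Fintype.linearCombination_apply, Pi.single_apply, hi'] at this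
  refine ⟨ω, fun B i h => ?_⟩
  by_contra hi
  refine hω ⟨(B, i), hi⟩ ?_
  rw [LinearMap.mem_ker, LinearMap.sub_apply, Fintype.linearCombination_apply, sub_eq_zero,
    LinearMap.proj_apply, ← h, B.cost_apply]
  exact Finset.sum_congr rfl fun j _ => by simp [mul_comm]

/-- The half-open simplicial cone of a chart, in which the coordinates indexed by `N` are required
to be strictly positive. -/
def SimplicialChart.halfOpenCone (B : SimplicialChart v) (N : Set ι) : Set E :=
  {x | ∀ i ∈ B.support, 0 ≤ B.coord x i ∧ (i ∈ N → 0 < B.coord x i)}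

theorem SimplicialChart.coord_ne_zero_of_generic (B : SimplicialChart v) {q : E}
    (hq : ∀ T : Finset ι, q ∈ Submodule.span ℝ (v '' T) → Submodule.span ℝ (v '' T) = ⊤)
    {i : ι} (hi : i ∈ B.support) : B.coord q i ≠ 0 := by
  intro h0
  have hmem : q ∈ Submodule.span ℝ (v '' (B.support.erase i : Finset ι)) := by
    rw [← B.sum_coord q]
    refine sum_smul_mem_span fun j hj => ?_
    by_cases hji : j = i
    · rw [hji, h0]
    · exact B.coord_of_notMem _ _ fun h => hj (Finset.mem_erase.2 ⟨hji, h⟩)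
  have hle : Submodule.span ℝ (v '' (B.support.erase i : Finset ι)) ≤
      LinearMap.ker (LinearMap.proj (R := ℝ) (φ := fun _ : ι => ℝ) i ∘ₗ B.coord) := by
    rw [Submodule.span_le]
    rintro _ ⟨j, hj, rfl⟩
    have hj' := Finset.mem_erase.1 (Finset.mem_coe.1 hj)
    simp [B.coord_self j hj'.2, hj'.1.symm]
  have := hle (hq _ hmem ▸ Submodule.mem_top (x := v i))
  simp [B.coord_self i hi] at this

/-- The cone of nonnegative combinations of the vectors `v i`. -/
def conicHull (v : ι → E) : Set E :=
  {x | ∃ a : ι → ℝ, (∀ i, 0 ≤ a i) ∧ ∑ i, a i • v i = x}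

/-- A cone generated by vectors of height one is a disjoint union of half-open simplicial
cones, each spanned by a basis chosen among the generators. -/
theorem exists_halfOpen_decomposition [FiniteDimensional ℝ E]
    (hv : Submodule.span ℝ (Set.range v) = ⊤) {ht : E →ₗ[ℝ] ℝ} (hht : ∀ i, ht (v i) = 1) :
    ∃ (𝓑 : Set (SimplicialChart v)) (c : ι → ℝ), (∀ i, 0 < c i) ∧
      ∀ x ∈ conicHull v,
        ∃! B, B ∈ 𝓑 ∧ x ∈ B.halfOpenCone {i | B.coord (∑ j, c j • v j) i < 0} := by
  obtain ⟨c, hc, hq⟩ := exists_generic_conic_combination hv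
  obtain ⟨ω, hω⟩ := exists_generic_cost v
  set q := ∑ i, c i • v i with hqdef
  refine ⟨{B | ∀ i, B.cost ω (v i) ≤ ω i}, c, hc, ?_⟩
  rintro x ⟨a, ha, rfl⟩
  set x := ∑ i, a i • v i with hx
  have hpos : ∀ᶠ ε : ℝ in nhdsWithin 0 (Set.Ioi 0), ∀ B : SimplicialChart v,
      ∀ i : B.support, (0 < B.coord x i + ε * B.coord q i ↔
        0 ≤ B.coord x i ∧ (B.coord q i < 0 → 0 < B.coord x i)) := by
    rw [Filter.eventually_all]
    intro B
    rw [Filter.eventually_all]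
    exact fun i => eventually_pos_iff _ (B.coord_ne_zero_of_generic hq i.2)
  obtain ⟨ε, hε, hgen, hiff⟩ :=
    (eventually_mem_nhdsWithin.and ((eventually_generic (x := x) hq).and hpos)).exists
  have hε : 0 < ε := hε
  set y := x + ε • q with hy
  have hcone : ∀ B : SimplicialChart v, x ∈ B.halfOpenCone {i | B.coord q i < 0} ↔
      ∀ i ∈ B.support, 0 < B.coord y i := by
    intro B
    refine forall₂_congr fun i hi => ?_
    have := hiff B ⟨i, hi⟩
    simp only [hy, map_add, map_smul, Pi.add_apply, Pi.smul_apply, smul_eq_mul]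
    exact this.symm
  have hsum : ∑ i, (a i + ε * c i) • v i = y := by
    simp [hy, hx, hqdef, add_smul, mul_smul, Finset.sum_add_distrib, ← Finset.smul_sum]
  obtain ⟨B, hBpos, hBopt⟩ := SimplicialChart.exists_optimal hht ω
    (fun i => add_nonneg (ha i) (mul_nonneg hε.le (hc i).le)) hsum hgen
  have hle : ∀ C D : SimplicialChart v, (∀ i, C.cost ω (v i) ≤ ω i) →
      (∀ i ∈ D.support, 0 < D.coord y i) → C.cost ω y ≤ D.cost ω y ∧
        (C.cost ω y = D.cost ω y → D.support ⊆ C.support) := by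
    intro C D hC hD
    have hCy : C.cost ω y = ∑ i, D.coord y i * C.cost ω (v i) := by
      conv_lhs => rw [← D.sum_coord y]
      simp
    have hterm : ∀ i ∈ Finset.univ, D.coord y i * C.cost ω (v i) ≤ D.coord y i * ω i := by
      intro i _
      by_cases hi : i ∈ D.support
      · exact mul_le_mul_of_nonneg_left (hC i) (hD i hi).le
      · simp [D.coord_of_notMem _ _ hi]
    rw [hCy, D.cost_apply]
    refine ⟨Finset.sum_le_sum hterm, fun h i hi => hω C i ?_⟩
    exact mul_left_cancel₀ (hD i hi).ne'
      ((Finset.sum_eq_sum_iff_of_le hterm).1 h i (Finset.mem_univ i))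
  refine ⟨B, ⟨hBopt, (hcone B).2 hBpos⟩, ?_⟩
  rintro C ⟨hCopt, hCx⟩
  have hCpos := (hcone C).1 hCx
  have h1 := hle B C hBopt hCpos
  have h2 := hle C B hCopt hBpos
  exact SimplicialChart.support_injective
    (Finset.Subset.antisymm (h1.2 (h1.1.antisymm h2.1)) (h2.2 (h2.1.antisymm h1.1)))

end Decomposition

section Counting

variable {E : Type*} [AddCommGroup E] [Module ℝ E]

/-- The generating series of a set of points graded by a height function. -/
noncomputable def heightSeries (ht : E →ₗ[ℝ] ℝ) (A : Set E) : PowerSeries ℤ :=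
  PowerSeries.mk fun m => ((A ∩ {x | ht x = m}).ncard : ℤ)

theorem heightSeries_mul_one_sub_X {ht : E →ₗ[ℝ] ℝ} {A : Set E} {b : E} (hb : ht b = 1)
    (hfin : ∀ m : ℕ, (A ∩ {x | ht x = m}).Finite) (hnn : ∀ x ∈ A, 0 ≤ ht x)
    (hA : ∀ x ∈ A, x + b ∈ A) :
    heightSeries ht A * (1 - PowerSeries.X) = heightSeries ht {x ∈ A | x - b ∉ A} := by
  ext m
  cases m with
  | zero =>
    rw [mul_sub, mul_one, map_sub, PowerSeries.coeff_zero_mul_X, sub_zero, heightSeries,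
      heightSeries, PowerSeries.coeff_mk, PowerSeries.coeff_mk]
    congr 2
    ext x
    simp only [Set.mem_inter_iff, Set.mem_ofPred_eq, Nat.cast_zero, and_congr_left_iff]
    refine fun h0 => ⟨fun hx => ⟨hx, fun hx' => ?_⟩, fun hx => hx.1⟩
    have := hnn _ hx'
    rw [map_sub, h0, hb] at this
    linarith
  | succ m =>
    rw [mul_sub, mul_one, map_sub, PowerSeries.coeff_succ_mul_X, heightSeries,
      heightSeries, PowerSeries.coeff_mk, PowerSeries.coeff_mk, PowerSeries.coeff_mk]
    have hunion : A ∩ {x | ht x = (m + 1 : ℕ)} =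
        ({x ∈ A | x - b ∉ A} ∩ {x | ht x = (m + 1 : ℕ)}) ∪ (· + b) '' (A ∩ {x | ht x = m}) := by
      ext x
      simp only [Set.mem_inter_iff, Set.mem_union, Set.mem_image, Set.mem_ofPred_eq]
      constructor
      · rintro ⟨hx, hm⟩
        by_cases hxb : x - b ∈ A
        · refine Or.inr ⟨x - b, ⟨hxb, ?_⟩, sub_add_cancel _ _⟩
          rw [map_sub, hm, hb]
          push_cast
          ring
        · exact Or.inl ⟨⟨hx, hxb⟩, hm⟩
      · rintro (⟨⟨hx, -⟩, hm⟩ | ⟨y, ⟨hy, hm⟩, rfl⟩)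
        · exact ⟨hx, hm⟩
        · exact ⟨hA y hy, by rw [map_add, hm, hb]; push_cast; ring⟩
    rw [hunion, Set.ncard_union_eq ?_ ((hfin (m + 1)).subset fun x hx => ⟨hx.1.1, hx.2⟩)
      ((hfin m).image _), Set.ncard_image_of_injective _ (add_left_injective b)]
    · push_cast
      ring
    · rw [Set.disjoint_left]
      rintro _ ⟨⟨-, hx⟩, -⟩ ⟨y, ⟨hy, -⟩, rfl⟩
      exact hx (by simpa using hy)

theorem heightSeries_iUnion {κ : Type*} [Fintype κ] {ht : E →ₗ[ℝ] ℝ} {A : κ → Set E}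
    (hfin : ∀ k, ∀ m : ℕ, (A k ∩ {x | ht x = m}).Finite)
    (hA : Pairwise (Function.onFun Disjoint A)) :
    heightSeries ht (⋃ k, A k) = ∑ k, heightSeries ht (A k) := by
  ext m
  simp only [heightSeries, map_sum, PowerSeries.coeff_mk]
  rw [Set.iUnion_inter, Set.ncard_iUnion_of_finite (fun k => hfin k m)
    (fun i j hij => (hA hij).mono Set.inter_subset_left Set.inter_subset_left),
    finsum_eq_sum_of_fintype]
  push_cast
  rfl

theorem exists_coe_eq_heightSeries {ht : E →ₗ[ℝ] ℝ} {A : Set E} {d : ℕ} (hd : 0 < d)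
    (hA : ∀ x ∈ A, ht x < d) :
    ∃ h : Polynomial ℤ, h.natDegree < d ∧ (∀ i, 0 ≤ h.coeff i) ∧
      (h : PowerSeries ℤ) = heightSeries ht A := by
  obtain ⟨n, rfl⟩ := Nat.exists_eq_succ_of_ne_zero hd.ne'
  refine ⟨PowerSeries.trunc (n + 1) (heightSeries ht A), PowerSeries.natDegree_trunc_lt _ _,
    fun i => ?_, ?_⟩
  · rw [PowerSeries.coeff_trunc]
    split_ifs
    · simp [heightSeries]
    · rfl
  · ext m
    rw [Polynomial.coeff_coe, PowerSeries.coeff_trunc]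
    split_ifs with hm
    · rfl
    · have : A ∩ {x | ht x = m} = ∅ := by
        ext x
        simp only [Set.mem_inter_iff, Set.mem_ofPred_eq, Set.mem_empty_iff_false, iff_false,
          not_and]
        intro hx hxm
        have h1 := hA x hx
        rw [hxm, Nat.cast_lt] at h1
        omega
      simp [heightSeries, this]

variable {ι : Type*} [Fintype ι] [DecidableEq ι] {v : ι → E}

theorem SimplicialChart.height_eq_sum (B : SimplicialChart v) {ht : E →ₗ[ℝ] ℝ}
    (hht : ∀ i, ht (v i) = 1) (x : E) : ht x = ∑ i ∈ B.support, B.coord x i := by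
  conv_lhs => rw [← B.sum_coord x]
  rw [map_sum, Finset.sum_subset (Finset.subset_univ B.support)
    (fun i _ hi => B.coord_of_notMem x i hi)]
  exact Finset.sum_congr rfl fun i _ => by simp [hht]

theorem SimplicialChart.halfOpenCone_subset (B : SimplicialChart v) (N : Set ι) :
    B.halfOpenCone N ⊆ conicHull v := by
  refine fun x hx => ⟨B.coord x, fun i => ?_, B.sum_coord x⟩
  by_cases hi : i ∈ B.support
  · exact (hx i hi).1
  · rw [B.coord_of_notMem x i hi]

theorem SimplicialChart.heightSeries_mul_pow (B : SimplicialChart v) {ht : E →ₗ[ℝ] ℝ}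
    (hht : ∀ i, ht (v i) = 1) {L : AddSubgroup E} (hL : ∀ i, v i ∈ L) {N : Set ι}
    (hN : ∃ i ∈ B.support, i ∉ N)
    (hfin : ∀ m : ℕ, ((L : Set E) ∩ B.halfOpenCone N ∩ {x | ht x = m}).Finite) :
    ∃ h : Polynomial ℤ, h.natDegree < Module.finrank ℝ E ∧ (∀ i, 0 ≤ h.coeff i) ∧
      heightSeries ht (L ∩ B.halfOpenCone N) * (1 - PowerSeries.X) ^ Module.finrank ℝ E =
        (h : PowerSeries ℤ) := by
  let A : Finset ι → Set E := fun T => {x | x ∈ (L : Set E) ∩ B.halfOpenCone N ∧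
    ∀ i ∈ T, ¬ (0 ≤ B.coord x i - 1 ∧ (i ∈ N → 0 < B.coord x i - 1))}
  have hA : ∀ T ⊆ B.support,
      heightSeries ht (L ∩ B.halfOpenCone N) * (1 - PowerSeries.X) ^ T.card =
        heightSeries ht (A T) := by
    intro T
    induction T using Finset.induction_on with
    | empty => simp [A, Set.inter_def]
    | insert i T hi ih =>
      intro hT
      obtain ⟨hiB, hTB⟩ := Finset.insert_subset_iff.1 hT
      have hself := B.coord_self i hiB
      have hne : ∀ j ∈ T, j ≠ i := fun j hj h => hi (h ▸ hj)
      rw [Finset.card_insert_of_notMem hi, pow_succ, ← mul_assoc, ih hTB,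
        heightSeries_mul_one_sub_X (hht i)
          (fun m => (hfin m).subset fun x hx => ⟨hx.1.1, hx.2⟩)
          ?_ ?_]
      · congr 1
        ext x
        simp only [A, Set.mem_ofPred_eq, Finset.forall_mem_insert]
        rw [and_assoc,
          and_comm (a := ¬(0 ≤ B.coord x i - 1 ∧ (i ∈ N → 0 < B.coord x i - 1)))]
        refine and_congr_right fun hx => and_congr_right fun hxT => not_congr ⟨fun h => ?_,
          fun h => ⟨⟨L.sub_mem hx.1 (hL i), fun j hj => ?_⟩, fun j hj => ?_⟩⟩
        · simpa [hself] using h.1.2 i hiB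
        · by_cases hji : j = i
          · subst hji
            simpa [hself] using h
          · simpa [hself, hji] using hx.2 j hj
        · simpa [hself, hne j hj] using hxT j hj
      · intro x hx
        rw [B.height_eq_sum hht]
        exact Finset.sum_nonneg fun j hj => (hx.1.2 j hj).1
      · refine fun x hx => ⟨⟨L.add_mem hx.1.1 (hL i), fun j hj => ?_⟩, fun j hj => ?_⟩
        · have := hx.1.2 j hj
          by_cases hji : j = i
          · subst hji
            simp only [map_add, hself, Pi.add_apply, Pi.single_eq_same]
            exact ⟨by linarith, fun _ => by linarith⟩
          · simpa [hself, hji] using this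
        · simpa [hself, hne j hj] using hx.2 j hj
  obtain ⟨k, hkB, hkN⟩ := hN
  have hpos : 0 < Module.finrank ℝ E := by
    rw [← B.card_support]
    exact Finset.card_pos.2 ⟨k, hkB⟩
  obtain ⟨h, hdeg, hnn, hh⟩ := exists_coe_eq_heightSeries (ht := ht) (A := A B.support) hpos
    fun x hx => by
      rw [B.height_eq_sum hht, ← B.card_support, Finset.card_eq_sum_ones, Nat.cast_sum]
      refine Finset.sum_lt_sum (fun i hi => ?_) ⟨k, hkB, ?_⟩
      · by_contra! hlt
        rw [Nat.cast_one] at hlt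
        exact hx.2 i hi ⟨by linarith, fun _ => by linarith⟩
      · by_contra! hle
        rw [Nat.cast_one] at hle
        exact hx.2 k hkB ⟨by linarith, fun h => absurd h hkN⟩
  exact ⟨h, hdeg, hnn, by rw [hh, ← hA _ subset_rfl, B.card_support]⟩

theorem heightSeries_conicHull_mul_pow [Nonempty ι] [FiniteDimensional ℝ E]
    (hv : Submodule.span ℝ (Set.range v) = ⊤) {ht : E →ₗ[ℝ] ℝ} (hht : ∀ i, ht (v i) = 1)
    {L : AddSubgroup E} (hL : ∀ i, v i ∈ L)
    (hfin : ∀ m : ℕ, ((L : Set E) ∩ conicHull v ∩ {x | ht x = m}).Finite) :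
    ∃ h : Polynomial ℤ, h.natDegree < Module.finrank ℝ E ∧ (∀ i, 0 ≤ h.coeff i) ∧
      heightSeries ht (L ∩ conicHull v) * (1 - PowerSeries.X) ^ Module.finrank ℝ E =
        (h : PowerSeries ℤ) := by
  classical
  obtain ⟨𝓑, c, hc, h𝓑⟩ := exists_halfOpen_decomposition hv hht
  have := Fintype.ofFinite 𝓑
  let N : SimplicialChart v → Set ι := fun B => {i | B.coord (∑ j, c j • v j) i < 0}
  have hN : ∀ B : SimplicialChart v, ∃ i ∈ B.support, i ∉ N B := by
    intro B
    by_contra! hB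
    have h1 := B.height_eq_sum hht (∑ j, c j • v j)
    have h2 : 0 < ht (∑ j, c j • v j) := by
      simpa [hht] using Finset.sum_pos (fun j _ => hc j) Finset.univ_nonempty
    have h3 := Finset.sum_nonpos fun i hi => (show B.coord _ i < 0 from hB i hi).le
    linarith
  have hfinB : ∀ B : SimplicialChart v, ∀ m : ℕ,
      ((L : Set E) ∩ B.halfOpenCone (N B) ∩ {x | ht x = m}).Finite := fun B m =>
    (hfin m).subset fun x hx => ⟨⟨hx.1.1, B.halfOpenCone_subset _ hx.1.2⟩, hx.2⟩
  have hunion : (L : Set E) ∩ conicHull v =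
      ⋃ B : 𝓑, (L : Set E) ∩ B.1.halfOpenCone (N B.1) := by
    ext x
    simp only [Set.mem_inter_iff, Set.mem_iUnion]
    constructor
    · rintro ⟨hxL, hx⟩
      obtain ⟨B, ⟨hB, hxB⟩, -⟩ := h𝓑 x hx
      exact ⟨⟨B, hB⟩, hxL, hxB⟩
    · rintro ⟨B, hxL, hxB⟩
      exact ⟨hxL, B.1.halfOpenCone_subset _ hxB⟩
  choose h hdeg hnn hh using fun B : 𝓑 => B.1.heightSeries_mul_pow hht hL (hN B.1) (hfinB B.1)
  have hpos : 0 < Module.finrank ℝ E := by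
    have i := Classical.arbitrary ι
    have : Nontrivial E := ⟨v i, 0, fun h0 => by simpa [h0] using hht i⟩
    exact Module.finrank_pos
  refine ⟨∑ B, h B, ?_, fun i => ?_, ?_⟩
  · exact (Polynomial.natDegree_sum_le _ _).trans_lt
      ((Finset.fold_max_lt _).2 ⟨hpos, fun B _ => hdeg B⟩)
  · rw [Polynomial.finsetSum_coeff]
    exact Finset.sum_nonneg fun B _ => hnn B i
  · rw [hunion, heightSeries_iUnion (A := fun B : 𝓑 => (L : Set E) ∩ B.1.halfOpenCone (N B.1))
        (fun B => hfinB B.1) ?_, Finset.sum_mul,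
      Finset.sum_congr rfl fun B _ => hh B]
    · exact (map_sum Polynomial.coeToPowerSeries.ringHom h Finset.univ).symm
    · intro B C hBC
      refine Set.disjoint_left.2 fun x hxB hxC => hBC (Subtype.ext ?_)
      exact (h𝓑 x (B.1.halfOpenCone_subset _ hxB.2)).unique ⟨B.2, hxB.2⟩ ⟨C.2, hxC.2⟩

end Counting

section Homogenization

theorem finrank_span_prod_one {F : Type*} [AddCommGroup F] [Module ℝ F] [FiniteDimensional ℝ F]
    {V : Set F} (hV : V.Nonempty) :
    Module.finrank ℝ (Submodule.span ℝ ((fun x : F => ((1 : ℝ), x)) '' V)) =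
      Module.finrank ℝ (vectorSpan ℝ V) + 1 := by
  obtain ⟨p, hp⟩ := hV
  have hspan : Submodule.span ℝ ((fun x : F => ((1 : ℝ), x)) '' V) =
      Submodule.span ℝ {((1 : ℝ), p)} ⊔ (vectorSpan ℝ V).map (LinearMap.inr ℝ ℝ F) := by
    apply le_antisymm
    · rw [Submodule.span_le]
      rintro _ ⟨x, hx, rfl⟩
      have : ((1 : ℝ), x) = ((1 : ℝ), p) + LinearMap.inr ℝ ℝ F (x - p) := by simp
      change ((1 : ℝ), x) ∈ _
      rw [this]
      exact Submodule.add_mem_sup (Submodule.mem_span_singleton_self _)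
        (Submodule.mem_map_of_mem (vsub_mem_vectorSpan ℝ hx hp))
    · rw [vectorSpan_eq_span_vsub_set_right ℝ hp, Submodule.map_span, sup_le_iff,
        Submodule.span_singleton_le_iff_mem, Submodule.span_le]
      refine ⟨Submodule.subset_span ⟨p, hp, rfl⟩, ?_⟩
      rintro _ ⟨_, ⟨x, hx, rfl⟩, rfl⟩
      have : LinearMap.inr ℝ ℝ F (x -ᵥ p) = ((1 : ℝ), x) - ((1 : ℝ), p) := by simp
      rw [SetLike.mem_coe]
      refine this ▸ Submodule.sub_mem _ (Submodule.subset_span ⟨x, hx, rfl⟩)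
        (Submodule.subset_span ⟨p, hp, rfl⟩)
  have hinf : Submodule.span ℝ {((1 : ℝ), p)} ⊓
      (vectorSpan ℝ V).map (LinearMap.inr ℝ ℝ F) = ⊥ := by
    rw [eq_bot_iff]
    rintro _ ⟨hx, ⟨y, -, rfl⟩⟩
    obtain ⟨a, ha⟩ := Submodule.mem_span_singleton.1 hx
    have h1 := congrArg Prod.fst ha
    simp only [Prod.smul_mk, smul_eq_mul, mul_one, LinearMap.inr_apply] at h1
    rw [h1, zero_smul] at ha
    rw [← ha]
    exact Submodule.zero_mem _
  have h := Submodule.finrank_sup_add_finrank_inf_eq (Submodule.span ℝ {((1 : ℝ), p)})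
    ((vectorSpan ℝ V).map (LinearMap.inr ℝ ℝ F))
  rw [hinf, finrank_bot, add_zero, finrank_span_singleton (by simp),
    (Submodule.equivMapOfInjective _ LinearMap.inr_injective (vectorSpan ℝ V)).symm.finrank_eq]
    at h
  rw [hspan, h, add_comm]

theorem mem_convexHull_range_iff {ι F : Type*} [Fintype ι] [AddCommGroup F] [Module ℝ F]
    {u : ι → F} {x : F} : x ∈ convexHull ℝ (Set.range u) ↔
      ∃ w : ι → ℝ, (∀ i, 0 ≤ w i) ∧ ∑ i, w i = 1 ∧ ∑ i, w i • u i = x := by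
  classical
  constructor
  · rw [convexHull_range_eq_exists_affineCombination]
    rintro ⟨s, w, hw, hw1, rfl⟩
    refine ⟨fun i => if i ∈ s then w i else 0, fun i => ?_, ?_, ?_⟩
    · dsimp only
      split_ifs with hi
      exacts [hw i hi, le_rfl]
    · simpa using hw1
    · rw [s.affineCombination_eq_linear_combination u w hw1]
      simp [ite_smul]
  · rintro ⟨w, hw, hw1, rfl⟩
    exact mem_convexHull_of_exists_fintype w u hw hw1 (fun i => ⟨i, rfl⟩) rfl

theorem mem_smul_convexHull_range_iff {ι F : Type*} [Fintype ι] [Nonempty ι] [AddCommGroup F]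
    [Module ℝ F] (u : ι → F) {t : ℝ} (ht : 0 ≤ t) (x : F) :
    x ∈ t • convexHull ℝ (Set.range u) ↔
      ∃ a : ι → ℝ, (∀ i, 0 ≤ a i) ∧ ∑ i, a i • ((1 : ℝ), u i) = (t, x) := by
  have hsum : ∀ a : ι → ℝ, ∑ i, a i • ((1 : ℝ), u i) = (∑ i, a i, ∑ i, a i • u i) := fun a =>
    Prod.ext (by simp [Prod.fst_sum]) (by simp [Prod.snd_sum])
  simp only [hsum, Prod.mk.injEq, Set.mem_smul_set]
  constructor
  · rintro ⟨y, hy, rfl⟩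
    obtain ⟨w, hw, hw1, rfl⟩ := mem_convexHull_range_iff.1 hy
    refine ⟨fun i => t * w i, fun i => mul_nonneg ht (hw i), ?_, ?_⟩
    · rw [← Finset.mul_sum, hw1, mul_one]
    · simp [mul_smul, Finset.smul_sum]
  · rintro ⟨a, ha, hat, rfl⟩
    rcases ht.eq_or_lt with rfl | hpos
    · have h0 : ∀ i, a i = 0 := fun i =>
        (Finset.sum_eq_zero_iff_of_nonneg fun i _ => ha i).1 hat i (Finset.mem_univ i)
      exact ⟨u (Classical.arbitrary ι), subset_convexHull ℝ _ ⟨_, rfl⟩, by simp [h0]⟩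
    · refine ⟨∑ i, (a i / t) • u i, mem_convexHull_range_iff.2
        ⟨fun i => a i / t, fun i => div_nonneg (ha i) ht, ?_, rfl⟩, ?_⟩
      · rw [← Finset.sum_div, hat, div_self hpos.ne']
      · rw [Finset.smul_sum]
        exact Finset.sum_congr rfl fun i _ => by rw [smul_smul, mul_div_cancel₀ _ hpos.ne']

theorem finite_setOf_intCast_mem {ι : Type*} [Fintype ι] {s : Set (ι → ℝ)}
    (hs : Bornology.IsBounded s) : {x : ι → ℤ | (fun i => (x i : ℝ)) ∈ s}.Finite := by
  classical
  obtain ⟨R, hR⟩ := hs.exists_norm_le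
  refine (Set.finite_Icc (fun _ : ι => -⌈R⌉) (fun _ => ⌈R⌉)).subset fun x hx => ?_
  have h : ∀ i, |(x i : ℝ)| ≤ ⌈R⌉ := fun i =>
    ((norm_le_pi_norm (fun i => (x i : ℝ)) i).trans (hR _ hx)).trans (Int.le_ceil R)
  exact ⟨fun i => by exact_mod_cast (abs_le.1 (h i)).1,
    fun i => by exact_mod_cast (abs_le.1 (h i)).2⟩

end Homogenization

/-- **Ehrhart series and Stanley nonnegativity.**  Let `P ⊆ ℝ^r` be a lattice polytope of
dimension `n` (the convex hull of a nonempty finite set of integer points), with Ehrhart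
counting function `f_P(m) = #(mP ∩ ℤ^r)`.  Then
`∑_{m ≥ 0} f_P(m) t^m = h*_P(t) / (1−t)^(n+1)` for a polynomial `h*_P` of degree at most `n`
with nonnegative integer coefficients. -/
theorem ehrhart_series_h_star {r n : ℕ} (V : Finset (Fin r → ℤ)) (hV : V.Nonempty)
    (P : Set (Fin r → ℝ))
    (hP : P = convexHull ℝ ((fun v : Fin r → ℤ => fun i => (v i : ℝ)) '' ↑V))
    (hdim : Module.finrank ℝ (vectorSpan ℝ P) = n)
    (f : ℕ → ℕ)
    (hf : ∀ m : ℕ, f m = Set.ncard {x : Fin r → ℤ | (fun i => (x i : ℝ)) ∈ (m : ℝ) • P}) :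
    ∃ h : Polynomial ℤ, h.natDegree ≤ n ∧ (∀ i, 0 ≤ h.coeff i) ∧
      PowerSeries.mk (fun m => (f m : ℤ)) * (1 - PowerSeries.X) ^ (n + 1)
        = (h : PowerSeries ℤ) := by
  have : Nonempty V := hV.to_subtype
  let φ : (Fin r → ℤ) →+ (Fin r → ℝ) := (Int.castAddHom ℝ).compLeft (Fin r)
  have hφ : Function.Injective φ := fun x y hxy =>
    funext fun i => Int.cast_injective (congrFun hxy i)
  let u : V → Fin r → ℝ := fun w => φ w
  have hrange : (fun v : Fin r → ℤ => fun i => (v i : ℝ)) '' ↑V = Set.range u :=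
    Set.image_eq_range _ _
  rw [hrange] at hP
  let S : Submodule ℝ (ℝ × (Fin r → ℝ)) := Submodule.span ℝ (Set.range fun w => ((1 : ℝ), u w))
  let v : V → S := fun w => ⟨(1, u w), Submodule.subset_span ⟨w, rfl⟩⟩
  let ht : S →ₗ[ℝ] ℝ := LinearMap.fst ℝ ℝ (Fin r → ℝ) ∘ₗ S.subtype
  let π : S →ₗ[ℝ] (Fin r → ℝ) := LinearMap.snd ℝ ℝ (Fin r → ℝ) ∘ₗ S.subtype
  let L : AddSubgroup S := φ.range.comap π.toAddMonoidHom
  have hrank : Module.finrank ℝ S = n + 1 := by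
    have h := finrank_span_prod_one (Set.range_nonempty u)
    rw [← Set.range_comp] at h
    rw [← hdim, hP, ← direction_affineSpan, affineSpan_convexHull, direction_affineSpan]
    exact h
  have hv : Submodule.span ℝ (Set.range v) = ⊤ := by
    refine Submodule.map_injective_of_injective S.subtype_injective ?_
    rw [Submodule.map_span, ← Set.range_comp, Submodule.map_subtype_top]
    rfl
  have hcone : ∀ (m : ℕ) (y : S), y ∈ conicHull v ∧ ht y = m ↔ π y ∈ (m : ℝ) • P ∧ ht y = m := by
    intro m y
    refine and_congr_left fun hy => ?_
    rw [hP, mem_smul_convexHull_range_iff u m.cast_nonneg]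
    refine exists_congr fun a => and_congr_right fun _ => ?_
    rw [← hy, ← S.subtype_injective.eq_iff, map_sum]
    rfl
  have himage : ∀ m : ℕ, π '' ((L : Set S) ∩ conicHull v ∩ {y | ht y = m}) =
      φ '' {x | (fun i => (x i : ℝ)) ∈ (m : ℝ) • P} := by
    intro m
    ext p
    constructor
    · rintro ⟨y, ⟨⟨⟨x, hx⟩, hy⟩, hm⟩, rfl⟩
      refine ⟨x, ?_, hx⟩
      change φ x ∈ (m : ℝ) • P
      rw [hx]
      exact ((hcone m y).1 ⟨hy, hm⟩).1
    · rintro ⟨x, hx, rfl⟩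
      have hx' : φ x ∈ (m : ℝ) • convexHull ℝ (Set.range u) := hP ▸ hx
      obtain ⟨a, -, ha⟩ := (mem_smul_convexHull_range_iff u m.cast_nonneg _).1 hx'
      have hmem : ((m : ℝ), φ x) ∈ S := ha ▸ Submodule.sum_mem _ fun w _ =>
        Submodule.smul_mem _ _ (Submodule.subset_span ⟨w, rfl⟩)
      have hy := (hcone m ⟨_, hmem⟩).2 ⟨hx, rfl⟩
      exact ⟨⟨_, hmem⟩, ⟨⟨⟨x, rfl⟩, hy.1⟩, hy.2⟩, rfl⟩
  have hinj : ∀ m : ℕ, Set.InjOn π ((L : Set S) ∩ conicHull v ∩ {y | ht y = m}) :=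
    fun m y hy z hz hyz => Subtype.ext (Prod.ext (hy.2.trans hz.2.symm) hyz)
  have hbdd : Bornology.IsBounded P := by
    rw [hP, isBounded_convexHull]
    exact (Set.finite_range u).isBounded
  have hfin : ∀ m : ℕ, ((L : Set S) ∩ conicHull v ∩ {y | ht y = m}).Finite := fun m => by
    refine Set.Finite.of_finite_image ?_ (hinj m)
    rw [himage]
    exact (finite_setOf_intCast_mem (hbdd.smul₀ (m : ℝ))).image φ
  obtain ⟨h, hdeg, hnn, hh⟩ := heightSeries_conicHull_mul_pow hv (ht := ht) (fun _ => rfl)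
    (L := L) (fun w => ⟨w.1, rfl⟩) hfin
  refine ⟨h, by omega, hnn, ?_⟩
  rw [← hh, hrank]
  congr 1
  ext m
  rw [PowerSeries.coeff_mk, heightSeries, PowerSeries.coeff_mk, hf,
    ← Set.ncard_image_of_injective _ hφ, ← himage, (hinj m).ncard_image]
end

section
/- Let n : V → V be a nilpotent endomorphism of a finite-dimensional vector space with n^{m+1} = 0. Then there exists a unique increasing filtration 0 ⊆ W_0 ⊆ W_1 ⊆ ⋯ ⊆ W_{2m} = V such that n(W_k) ⊆ W_{k−2} for all k and the induced map n^k : Gr^W_{m+k} → Gr^W_{m−k} is an isomorphism for all k ≥ 0. -/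
namespace MonodromyWeight

variable {K V : Type*} [Field K] [AddCommGroup V] [Module K V]

/-- The monodromy weight filtration of `n` centered at `0`, given by
`W_k = ∑ j, n ^ j (ker n ^ (k + 2 * j + 1))`. -/
def weight (n : Module.End K V) (k : ℤ) : Submodule K V :=
  ⨆ j : ℕ, (LinearMap.ker (n ^ (k + 2 * j + 1).toNat)).map (n ^ j)

variable {n : Module.End K V}

lemma pow_apply_eq_zero_of_le {a b : ℕ} (hab : a ≤ b) {x : V} (hx : (n ^ a) x = 0) :
    (n ^ b) x = 0 := by
  obtain ⟨c, rfl⟩ := Nat.exists_eq_add_of_le' hab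
  rw [pow_add, Module.End.mul_apply, hx, map_zero]

lemma pow_apply_mem_weight {k : ℤ} (j : ℕ) {y : V} (hy : (n ^ (k + 2 * j + 1).toNat) y = 0) :
    (n ^ j) y ∈ weight n k :=
  Submodule.mem_iSup_of_mem j ⟨y, hy, rfl⟩

lemma weight_le {k : ℤ} {P : Submodule K V}
    (h : ∀ (j : ℕ) (y : V), (n ^ (k + 2 * j + 1).toNat) y = 0 → (n ^ j) y ∈ P) :
    weight n k ≤ P := by
  refine iSup_le fun j => ?_
  rintro _ ⟨y, hy, rfl⟩
  exact h j y hy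

lemma weight_mono : Monotone (weight n) := fun _ _ hkl =>
  weight_le fun j _ hy => pow_apply_mem_weight j (pow_apply_eq_zero_of_le (by omega) hy)

lemma weight_eq_bot {m : ℕ} (hn : n ^ (m + 1) = 0) {k : ℤ} (hk : k < -m) :
    weight n k = ⊥ := by
  refine le_bot_iff.mp (weight_le fun j y hy => ?_)
  rw [Submodule.mem_bot]
  by_cases hj : j ≤ m
  · exact pow_apply_eq_zero_of_le (by omega) hy
  · exact pow_apply_eq_zero_of_le (a := m + 1) (by omega) (by simp [hn])

lemma ker_pow_le_weight (k : ℕ) : LinearMap.ker (n ^ k) ≤ weight n (k - 1) := fun x hx =>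
  pow_apply_mem_weight 0 (pow_apply_eq_zero_of_le (a := k) (by omega) hx)

lemma weight_eq_top {m : ℕ} (hn : n ^ (m + 1) = 0) {k : ℤ} (hk : m ≤ k) :
    weight n k = ⊤ := by
  refine top_le_iff.mp (le_trans ?_ ((ker_pow_le_weight (m + 1)).trans (weight_mono ?_)))
  · simp [hn]
  · push_cast
    omega

lemma map_weight_le (k : ℤ) : (weight n k).map n ≤ weight n (k - 2) := by
  refine Submodule.map_le_iff_le_comap.mpr (weight_le fun j y hy => ?_)
  rw [Submodule.mem_comap, ← Module.End.mul_apply, ← pow_succ']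
  exact pow_apply_mem_weight (j + 1) (pow_apply_eq_zero_of_le (by omega) hy)

lemma weight_neg_le (k : ℕ) : weight n (-k) ≤ (weight n k).map (n ^ k) := by
  refine weight_le fun j y hy => ?_
  by_cases hj : k ≤ j
  · obtain ⟨i, rfl⟩ := Nat.exists_eq_add_of_le hj
    rw [pow_add, Module.End.mul_apply]
    exact Submodule.mem_map_of_mem
      (pow_apply_mem_weight i (pow_apply_eq_zero_of_le (by omega) hy))
  · rw [pow_apply_eq_zero_of_le (by omega) hy]
    exact zero_mem _

lemma mem_weight_of_pow_apply_mem (k : ℕ) {x : V} (hx : (n ^ k) x ∈ weight n (-k - 1)) :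
    x ∈ weight n (k - 1) := by
  obtain ⟨z, hz, hzx⟩ := weight_neg_le (n := n) (k + 1) (by convert hx using 2; push_cast; ring)
  have hker : x - n z ∈ LinearMap.ker (n ^ k) := by
    rw [LinearMap.mem_ker, map_sub, ← hzx, pow_succ, Module.End.mul_apply, sub_self]
  have hnz : n z ∈ weight n (k - 1) := by
    convert map_weight_le _ (Submodule.mem_map_of_mem hz) using 2
    push_cast
    ring
  simpa using add_mem (ker_pow_le_weight k hker) hnz

lemma pow_apply_mem_of_map_le {W : ℤ → Submodule K V}
    (hW : ∀ k : ℤ, (W k).map n ≤ W (k - 2)) (j : ℕ) :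
    ∀ {k : ℤ} {x : V}, x ∈ W k → (n ^ j) x ∈ W (k - 2 * j) := by
  induction j with
  | zero => intro k x hx; simpa using hx
  | succ j ih =>
    intro k x hx
    rw [pow_succ, Module.End.mul_apply]
    convert ih (hW k (Submodule.mem_map_of_mem hx)) using 2
    push_cast
    ring

/-- If `W` satisfies the surjectivity conditions and `W'` the injectivity conditions, then the
inclusion `W ≤ W'` propagates from the outermost steps to all steps. -/
lemma le_of_surj_of_inj {m : ℕ} {W W' : ℤ → Submodule K V}
    (mono' : Monotone W')
    (bot : ∀ k : ℤ, k < 0 → W k = ⊥)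
    (top' : ∀ k : ℤ, 2 * (m : ℤ) ≤ k → W' k = ⊤)
    (mono : Monotone W)
    (hW : ∀ k : ℤ, (W k).map n ≤ W (k - 2))
    (hW' : ∀ k : ℤ, (W' k).map n ≤ W' (k - 2))
    (surj : ∀ k : ℕ, W ((m : ℤ) - k) ≤ (W ((m : ℤ) + k)).map (n ^ k) ⊔ W ((m : ℤ) - k - 1))
    (inj' : ∀ k : ℕ, ∀ x ∈ W' ((m : ℤ) + k), (n ^ k) x ∈ W' ((m : ℤ) - k - 1) →
      x ∈ W' ((m : ℤ) + k - 1)) :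
    W ≤ W' := by
  have pair : ∀ d k : ℕ, m ≤ d + k →
      W (m + k) ≤ W' (m + k) ∧ W (m - k - 1) ≤ W' (m - k - 1) := by
    intro d
    induction d with
    | zero =>
      intro k hk
      exact ⟨le_top.trans_eq (top' _ (by omega)).symm, (bot _ (by omega)).trans_le bot_le⟩
    | succ d ih =>
      intro k hk
      obtain ⟨hpos, hneg⟩ := ih (k + 1) (by omega)
      have hs := surj (k + 1)
      have hi := inj' (k + 1)
      have e₁ : (m : ℤ) + (k + 1 : ℕ) - 1 = m + k := by push_cast; ring
      have e₂ : (m : ℤ) - (k + 1 : ℕ) = m - k - 1 := by push_cast; ring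
      rw [e₁] at hi
      rw [e₂] at hs hi hneg
      constructor
      · intro x hx
        refine hi x (hpos (mono (by omega) hx)) (hneg ?_)
        convert pow_apply_mem_of_map_le hW (k + 1) hx using 2
        push_cast
        ring
      · refine hs.trans (sup_le ?_ (hneg.trans (mono' (by omega))))
        rintro _ ⟨x, hx, rfl⟩
        convert pow_apply_mem_of_map_le hW' (k + 1) (hpos hx) using 2
        push_cast
        ring
  intro k
  by_cases hk : (m : ℤ) ≤ k
  · obtain ⟨i, hi⟩ := Int.eq_ofNat_of_zero_le (sub_nonneg.mpr hk)
    obtain rfl : k = m + i := by omega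
    exact (pair m i (by omega)).1
  · obtain ⟨i, hi⟩ := Int.eq_ofNat_of_zero_le (show 0 ≤ (m : ℤ) - k - 1 by omega)
    obtain rfl : k = m - i - 1 := by omega
    exact (pair m i (by omega)).2

end MonodromyWeight


/-- **Existence and uniqueness of the monodromy weight filtration.**  Let `n : V → V` be a
nilpotent endomorphism of a finite-dimensional vector space with `n^(m+1) = 0`.  Then there is
a unique increasing filtration `0 ⊆ W₀ ⊆ W₁ ⊆ ⋯ ⊆ W_{2m} = V` (indexed by `ℤ`, with
`W_k = 0` for `k < 0` and `W_k = V` for `k ≥ 2m`) such that `n(W_k) ⊆ W_{k−2}` for all `k` and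
the induced map `n^k : Gr^W_{m+k} → Gr^W_{m−k}` is an isomorphism for all `k ≥ 0` (expressed
by surjectivity and injectivity on the graded pieces). -/
theorem monodromy_weight_filtration {K V : Type*} [Field K] [AddCommGroup V] [Module K V]
    [FiniteDimensional K V] (m : ℕ) (n : Module.End K V) (hn : n ^ (m + 1) = 0) :
    ∃! W : ℤ → Submodule K V,
      Monotone W ∧
      (∀ k : ℤ, k < 0 → W k = ⊥) ∧
      (∀ k : ℤ, 2 * (m : ℤ) ≤ k → W k = ⊤) ∧
      (∀ k : ℤ, (W k).map n ≤ W (k - 2)) ∧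
      (∀ k : ℕ,
        (W ((m : ℤ) - k) ≤ (W ((m : ℤ) + k)).map (n ^ k) ⊔ W ((m : ℤ) - k - 1)) ∧
        (∀ x ∈ W ((m : ℤ) + k), (n ^ k) x ∈ W ((m : ℤ) - k - 1) → x ∈ W ((m : ℤ) + k - 1))) := by
  open MonodromyWeight in
  refine existsUnique_of_exists_of_unique
    ⟨fun k => weight n (k - m), fun k l hkl => weight_mono (by omega),
      fun k hk => weight_eq_bot hn (by omega), fun k hk => weight_eq_top hn (by omega),
      fun k => ?_, fun k => ⟨?_, fun x _ hx => ?_⟩⟩ ?_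
  · convert map_weight_le (n := n) (k - m) using 2
    ring
  · refine le_sup_of_le_left ?_
    convert weight_neg_le (n := n) k using 3 <;> ring
  · convert mem_weight_of_pow_apply_mem (n := n) (x := x) k ?_ using 2
    · ring
    · convert hx using 2
      ring
  · rintro W W' ⟨mono, bot, top, hW, gr⟩ ⟨mono', bot', top', hW', gr'⟩
    exact le_antisymm
      (le_of_surj_of_inj mono' bot top' mono hW hW' (fun k => (gr k).1) fun k => (gr' k).2)
      (le_of_surj_of_inj mono bot' top mono' hW' hW (fun k => (gr' k).1) fun k => (gr k).2)
end
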